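/- arXiv:1808.09647 — 2 statements merged into one kernel-verified Lean document; each statement's English description precedes it below -/
import Mathlib

section
/- Let (B_n)_{n∈ℕ} be a sequence of finite-dimensional C*-algebras and let (v_n)_{n∈ℕ} ∈ ∏_n B_n with ‖v_n‖ ≤ 1 for all n and ‖v_n v_n* − v_n* v_n‖ → 0 as n → ∞ (i.e., the image of (v_n) in ∏_n B_n / ⊕_n B_n is normal). Then there exist normal elements v̄_n ∈ B_n with ‖v̄_n‖ ≤ 1 for all n and ‖v̄_n − v_n‖ → 0 as n → ∞; in particular (v̄_n) is a normal contractive lift of the image of (v_n) in the quotient. -/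
/-!
The proof contains a proof of Lin's theorem, in the form of a statement about the quotient
`Q = ∏ₙ Aₙ / ⊕ₙ Aₙ` for unital finite-dimensional `Aₙ`: a normal element of `Q` is a limit of
elements which have normal lifts. Nonunital algebras `Bₙ` are reduced to their unitizations, where a
normal element near `vₙ` has a small scalar part, which may be dropped (`exists_normal_near`).
Choosing nearly closest normal elements and truncating their norms gives the theorem.

Two special features of `Q` are used. Invertible elements are dense in finite-dimensional algebras,
so every element of `Q` is the product of a unitary and a positive element (`polar_quot`), and
unitaries of `Q` lift to unitaries. In finite-dimensional algebras every function may be applied to a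
normal element, since spectra are finite; applied to a lift of a unitary `w ∈ Q` this gives a
substitute for a discontinuous function `κ` of `w`, which satisfies all multiplicative relations
with continuous functions of `w` suggested by the values of `κ` (`exists_borel`).

By polar decomposition a normal `x ∈ Q` can be moved a little so that its spectrum avoids the integer
points of the plane in a large square (`punch`). The vertical lines `Re z = j` are then divided into
unit segments joining consecutive integer points. A unit segment is the preimage of `-1` under a
continuous map `seg` from the plane without the two end points to the circle, so the unitary `seg x`
exists and can be cut at `-1` by the previous paragraph. The continuous functional calculus of `x`
away from the line and the cuts along its segments fit together to a projection, which stands for the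
indicator function of the half plane `Re z > j` (`proj`, `Grid.proj_sq`). The projections of
different lines commute, and they commute with a continuous function of `x` which differs from `Im z`
by at most `1` and is constant near each segment (`height`). Hence the sum of the projections, up to
an additive constant, is an element `a` with integer spectrum, and `x` is within distance `6` of
`a + ib` for some self-adjoint `b` commuting with `a` (`exists_approx`). Applied to large multiples
of `x` this gives approximations of `x` of arbitrary precision.

Finally `a + ib` has a normal lift (`exists_normal_lift`): since `a` has integer spectrum, a lift of
`a` can be rounded to integer spectrum, and the compression of a lift of `b` to the block diagonal
given by the spectral projections commutes with it and is still a lift of `b`.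
-/

namespace LinThm

open Filter Topology
open scoped ENNReal

universe u

/-! ### The product of a sequence of C⋆-algebras modulo null sequences -/

section Quotient

variable (A : ℕ → Type u) [∀ n, CStarAlgebra (A n)] [∀ n, Nontrivial (A n)]

/-- The product `∏ₙ Aₙ` of unital C⋆-algebras. Nontriviality of the factors is what makes its unit have
norm one. -/
noncomputable instance instCStarLp : CStarAlgebra (lp A ∞) where

/-- The ideal `⊕ₙ Aₙ` of null sequences in `∏ₙ Aₙ`. -/
def c0 : Ideal (lp A ∞) where
  carrier := {a | Tendsto (fun n => ‖a n‖) atTop (𝓝 0)}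
  zero_mem' := by simp
  add_mem' {a b} ha hb := by
    have h := Tendsto.add (show Tendsto (fun n => ‖a n‖) atTop (𝓝 0) from ha)
      (show Tendsto (fun n => ‖b n‖) atTop (𝓝 0) from hb)
    rw [add_zero] at h
    exact squeeze_zero (fun n => norm_nonneg _) (fun n => norm_add_le _ _) h
  smul_mem' c a ha := by
    have h := (show Tendsto (fun n => ‖a n‖) atTop (𝓝 0) from ha).const_mul ‖c‖
    rw [mul_zero] at h
    refine squeeze_zero (fun n => norm_nonneg _) (fun n => ?_) h
    exact (norm_mul_le (c n) (a n)).trans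
      (mul_le_mul_of_nonneg_right (lp.norm_apply_le_norm ENNReal.top_ne_zero c n) (norm_nonneg _))

variable {A}

theorem mem_c0 {a : lp A ∞} : a ∈ c0 A ↔ Tendsto (fun n => ‖a n‖) atTop (𝓝 0) := Iff.rfl

instance : (c0 A).IsTwoSided where
  mul_mem_of_left {a} b ha := by
    have h := (mem_c0.1 ha).mul_const ‖b‖
    rw [zero_mul] at h
    refine squeeze_zero (fun n => norm_nonneg _) (fun n => ?_) h
    exact (norm_mul_le (a n) (b n)).trans
      (mul_le_mul_of_nonneg_left (lp.norm_apply_le_norm ENNReal.top_ne_zero b n) (norm_nonneg _))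

theorem star_mem_c0 {a : lp A ∞} (ha : a ∈ c0 A) : star a ∈ c0 A := by
  rw [mem_c0] at ha ⊢
  simpa using ha

/-- A sequence whose norms are eventually at most `r` agrees, up to a null sequence, with its
truncation to the large indices, whose norm is at most `r`. -/
theorem exists_trunc (a : lp A ∞) (r : ℝ) (hr : 0 ≤ r) (h : ∀ᶠ n in atTop, ‖a n‖ ≤ r) :
    ∃ b : lp A ∞, a - b ∈ c0 A ∧ ‖b‖ ≤ r := by
  obtain ⟨N, hN⟩ := eventually_atTop.1 h
  let f : ∀ n, A n := fun n => if N ≤ n then a n else 0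
  have hf : ∀ n, ‖f n‖ ≤ r := by
    intro n
    by_cases hn : N ≤ n
    · simpa [f, hn] using hN n hn
    · simpa [f, hn] using hr
  refine ⟨⟨f, memℓp_infty ⟨r, by rintro _ ⟨n, rfl⟩; exact hf n⟩⟩, ?_,
    lp.norm_le_of_forall_le hr hf⟩
  rw [mem_c0]
  refine tendsto_const_nhds.congr' ?_
  filter_upwards [eventually_ge_atTop N] with n hn
  change 0 = ‖a n - f n‖
  simp [f, hn]

/-- The quotient norm dominates `limsup ‖aₙ‖`. -/
theorem eventually_le_of_mk_lt {a : lp A ∞} {r : ℝ}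
    (h : ‖(Submodule.Quotient.mk a : lp A ∞ ⧸ c0 A)‖ < r) : ∀ᶠ n in atTop, ‖a n‖ < r := by
  obtain ⟨b, hb, hbr⟩ := Submodule.Quotient.norm_mk_lt (Submodule.Quotient.mk a : lp A ∞ ⧸ c0 A)
    (half_pos (sub_pos.2 h))
  have hab := mem_c0.1 ((Submodule.Quotient.eq _).1 hb.symm)
  filter_upwards [hab.eventually (gt_mem_nhds (half_pos (sub_pos.2 h)))] with n hn
  have h1 : ‖a n‖ ≤ ‖(a - b) n‖ + ‖b n‖ := by
    have : a n = (a - b) n + b n := by simp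
    rw [this]; exact norm_add_le _ _
  have h2 := lp.norm_apply_le_norm ENNReal.top_ne_zero b n
  linarith

/-- The quotient norm is dominated by `limsup ‖aₙ‖`. -/
theorem mk_le_of_eventually_le {a : lp A ∞} {r : ℝ} (hr : 0 ≤ r)
    (h : ∀ᶠ n in atTop, ‖a n‖ ≤ r) : ‖(Submodule.Quotient.mk a : lp A ∞ ⧸ c0 A)‖ ≤ r := by
  obtain ⟨b, hb, hbr⟩ := exists_trunc a r hr h
  rw [(Submodule.Quotient.eq _).2 hb]
  exact (Submodule.Quotient.norm_mk_le _ b).trans hbr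

instance isClosed_c0 : IsClosed (c0 A : Set (lp A ∞)) := by
  refine isClosed_of_closure_subset fun a ha => ?_
  refine mem_c0.2 (Metric.tendsto_nhds.2 fun ε hε => ?_)
  obtain ⟨b, hb, hab⟩ := Metric.mem_closure_iff.1 ha (ε / 2) (half_pos hε)
  filter_upwards [(mem_c0.1 hb).eventually (gt_mem_nhds (half_pos hε))] with n hn
  have h1 : ‖a n‖ ≤ ‖(a - b) n‖ + ‖b n‖ := by
    have : a n = (a - b) n + b n := by simp
    rw [this]; exact norm_add_le _ _
  have h2 := lp.norm_apply_le_norm ENNReal.top_ne_zero (a - b) n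
  rw [dist_eq_norm] at hab
  rw [dist_zero_right, norm_norm]
  linarith

variable (A) in
/-- The quotient C⋆-algebra `∏ₙ Aₙ / ⊕ₙ Aₙ`. -/
abbrev Q := lp A ∞ ⧸ c0 A

noncomputable instance : NormedRing (Q A) where
  __ := Submodule.Quotient.normedAddCommGroup (c0 A)
  __ := Ideal.Quotient.ring (c0 A)
  norm_mul_le x y := by
    revert x y
    rintro ⟨a⟩ ⟨b⟩
    refine le_of_forall_pos_le_add fun ε hε => ?_
    set s := ‖(Submodule.Quotient.mk a : lp A ∞ ⧸ c0 A)‖ with hs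
    set t := ‖(Submodule.Quotient.mk b : lp A ∞ ⧸ c0 A)‖ with ht
    have hs0 : 0 ≤ s := norm_nonneg _
    have ht0 : 0 ≤ t := norm_nonneg _
    -- `δ` is chosen with `(s + δ) * (t + δ) ≤ s * t + ε`
    obtain ⟨δ, hδ, hδ1, hδε⟩ : ∃ δ : ℝ, 0 < δ ∧ δ ≤ 1 ∧ δ * (s + t + 1) ≤ ε :=
      ⟨min 1 (ε / (s + t + 1)), by positivity, min_le_left _ _, by
        calc _ ≤ ε / (s + t + 1) * (s + t + 1) :=
              mul_le_mul_of_nonneg_right (min_le_right _ _) (by positivity)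
          _ = ε := by field_simp⟩
    refine (mk_le_of_eventually_le (a := a * b) (r := (s + δ) * (t + δ)) (by positivity)
      ?_).trans (show _ ≤ s * t + ε by nlinarith)
    filter_upwards [eventually_le_of_mk_lt (a := a) (r := s + δ) (by linarith),
      eventually_le_of_mk_lt (a := b) (r := t + δ) (by linarith)] with n ha hb
    exact (norm_mul_le (a n) (b n)).trans (mul_le_mul ha.le hb.le (norm_nonneg _) (by positivity))

noncomputable instance : StarRing (Q A) where
  star := Quotient.map' star fun a b hab => by
    rw [Submodule.quotientRel_def] at hab ⊢
    rw [← star_sub]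
    exact star_mem_c0 hab
  star_involutive := by
    rintro ⟨a⟩
    exact congrArg (Submodule.Quotient.mk (p := c0 A)) (star_star a)
  star_mul := by
    rintro ⟨a⟩ ⟨b⟩
    exact congrArg (Submodule.Quotient.mk (p := c0 A)) (star_mul a b)
  star_add := by
    rintro ⟨a⟩ ⟨b⟩
    exact congrArg (Submodule.Quotient.mk (p := c0 A)) (star_add a b)

noncomputable instance : NormedAlgebra ℂ (Q A) where
  __ := Ideal.Quotient.algebra ℂ (I := c0 A)
  norm_smul_le := (Submodule.Quotient.normedSpace (c0 A) ℂ).norm_smul_le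

noncomputable instance : CStarAlgebra (Q A) where
  norm_mul_self_le := by
    rintro ⟨a⟩
    refine le_of_forall_gt fun r hr => ?_
    obtain ⟨t, ht, htr⟩ := exists_between hr
    have ht0 : 0 ≤ t := (norm_nonneg _).trans ht.le
    have h1 : ‖(Submodule.Quotient.mk a : lp A ∞ ⧸ c0 A)‖ ≤ √t := by
      refine mk_le_of_eventually_le (Real.sqrt_nonneg t) ?_
      filter_upwards [eventually_le_of_mk_lt (a := star a * a) ht] with n hn
      refine Real.le_sqrt_of_sq_le ?_
      rw [sq, ← CStarRing.norm_star_mul_self]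
      exact hn.le
    refine lt_of_le_of_lt ?_ htr
    calc _ ≤ √t * √t := mul_le_mul h1 h1 (norm_nonneg _) (Real.sqrt_nonneg _)
      _ = t := Real.mul_self_sqrt ht0
  star_smul := by
    rintro c ⟨a⟩
    exact congrArg (Submodule.Quotient.mk (p := c0 A)) (star_smul c a)

variable (A) in
/-- The quotient map `π : ∏ₙ Aₙ → ∏ₙ Aₙ / ⊕ₙ Aₙ`, packaged with the only properties of it that are
used below; the last one says that `‖π a‖` is at least `limsup ‖aₙ‖`. -/
theorem exists_quotient : ∃ (Q : Type u) (_ : CStarAlgebra Q) (π : lp A ∞ →⋆ₐ[ℂ] Q),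
    Function.Surjective π ∧ Continuous π ∧
    (∀ a, Tendsto (fun n => ‖a n‖) atTop (𝓝 0) → π a = 0) ∧
    (∀ a r, ‖π a‖ < r → ∀ᶠ n in atTop, ‖a n‖ < r) := by
  refine ⟨Q A, inferInstance,
    { (Ideal.Quotient.mk (c0 A) : lp A ∞ →+* Q A) with
      commutes' := fun _ => rfl
      map_star' := fun _ => rfl }, Ideal.Quotient.mk_surjective, ?_, ?_, ?_⟩
  · exact continuous_quot_mk
  · exact fun a ha => Ideal.Quotient.eq_zero_iff_mem.2 (mem_c0.2 ha)
  · exact fun a r h => eventually_le_of_mk_lt h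

end Quotient

/-! ### Finite-dimensional C⋆-algebras -/

section FiniteDim

/-- Spectral values are roots of the minimal polynomial. -/
theorem finite_spectrum {𝕜 A : Type*} [Field 𝕜] [Ring A] [Algebra 𝕜 A] [FiniteDimensional 𝕜 A]
    [Nontrivial A] (a : A) : (spectrum 𝕜 a).Finite := by
  classical
  have hint : IsIntegral 𝕜 a := Algebra.IsIntegral.isIntegral a
  refine ((minpoly 𝕜 a).roots.toFinset.finite_toSet).subset fun μ hμ => ?_
  have h := spectrum.subset_polynomial_aeval a (minpoly 𝕜 a) ⟨μ, hμ, rfl⟩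
  rw [minpoly.aeval, spectrum.zero_eq] at h
  simpa [minpoly.ne_zero hint] using h

variable {A : Type*} [CStarAlgebra A] [FiniteDimensional ℂ A] [Nontrivial A]

theorem finite_spectrum_real (a : A) : (spectrum ℝ a).Finite :=
  have : FiniteDimensional ℝ A := FiniteDimensional.complexToReal A
  finite_spectrum a

/-- In finite dimensions every function is continuous on the spectrum. -/
theorem contOn (f : ℂ → ℂ) (a : A) : ContinuousOn f (spectrum ℂ a) :=
  (finite_spectrum a).continuousOn f

theorem contOn_real (f : ℝ → ℝ) (a : A) : ContinuousOn f (spectrum ℝ a) :=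
  (finite_spectrum_real a).continuousOn f

/-- Approximate polar decomposition: invertible elements are dense, and they are the product of a
unitary and a positive element (written as a square). -/
theorem polar_finite (a : A) {ε : ℝ} (hε : 0 < ε) :
    ∃ u ∈ unitary A, ∃ s : A, IsSelfAdjoint s ∧ ‖a - u * (s * s)‖ ≤ ε := by
  -- a small shift of `a` is invertible since its spectrum is finite
  obtain ⟨t, ht0, htε, ht⟩ : ∃ t : ℝ, 0 < t ∧ t ≤ ε ∧ (-t : ℂ) ∉ spectrum ℂ a := by
    have hfin : {t : ℝ | (-t : ℂ) ∈ spectrum ℂ a}.Finite :=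
      (finite_spectrum a).preimage (f := fun t : ℝ => (-t : ℂ)) (fun x _ y _ h => by simpa using h)
    have hinf : (Set.Ioc 0 ε).Infinite := Set.Ioc_infinite hε
    obtain ⟨t, ht, ht'⟩ := (hinf.sdiff hfin).nonempty
    exact ⟨t, ht.1, ht.2, ht'⟩
  set Y : A := a + algebraMap ℂ A t with hY
  have hYu : IsUnit Y := by
    rw [spectrum.notMem_iff] at ht
    rw [← IsUnit.neg_iff]
    convert ht using 1
    simp [hY]
    abel
  set P : A := star Y * Y with hP
  have hPsa : IsSelfAdjoint P := IsSelfAdjoint.star_mul_self Y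
  have hPu : IsUnit P := hYu.star.mul hYu
  have hpos : ∀ x ∈ spectrum ℝ P, 0 < x := fun x hx =>
    lt_of_le_of_ne (spectrum_star_mul_self_nonneg x hx) fun h => by
      rw [← h] at hx
      exact (spectrum.zero_notMem ℝ hPu) hx
  -- `c * c` is `|Y|` and `d` is its inverse
  set c : A := cfc (fun x : ℝ => √(√x)) P with hc
  set d : A := cfc (fun x : ℝ => (√x)⁻¹) P with hd
  have hdsa : IsSelfAdjoint d := cfc_predicate _ _
  have hdPd : d * P * d = 1 := by
    have hid : P = cfc (fun x : ℝ => x) P := (cfc_id' ℝ P).symm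
    rw [hd]
    nth_rw 2 [hid]
    rw [← cfc_mul _ _ _ (contOn_real _ _) (contOn_real _ _),
      ← cfc_mul _ _ _ (contOn_real _ _) (contOn_real _ _), ← cfc_const_one ℝ P]
    refine cfc_congr fun x hx => ?_
    have := hpos x hx
    have h2 : √x ≠ 0 := (Real.sqrt_pos.2 this).ne'
    have h3 : √x * √x = x := Real.mul_self_sqrt this.le
    nth_rw 2 [← h3]
    field_simp
  have hdcc : d * (c * c) = 1 := by
    rw [hc, hd, ← cfc_mul _ _ _ (contOn_real _ _) (contOn_real _ _),
      ← cfc_mul _ _ _ (contOn_real _ _) (contOn_real _ _), ← cfc_const_one ℝ P]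
    refine cfc_congr fun x hx => ?_
    have h2 : √x ≠ 0 := (Real.sqrt_pos.2 (hpos x hx)).ne'
    rw [Real.mul_self_sqrt (Real.sqrt_nonneg x), inv_mul_cancel₀ h2]
  have hdu : IsUnit d := by
    refine (isUnit_cfc_iff _ _ (contOn_real _ _)).2 fun x hx => ?_
    exact inv_ne_zero (Real.sqrt_pos.2 (hpos x hx)).ne'
  have h1 : star (Y * d) * (Y * d) = 1 := by
    rw [star_mul, hdsa.star_eq, ← hdPd, hP]
    simp only [mul_assoc]
  have h2 : (Y * d) * star (Y * d) = 1 := by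
    obtain ⟨v, hv⟩ := hYu.mul hdu
    rw [← hv] at h1 ⊢
    rw [Units.mul_eq_one_iff_eq_inv.1 h1]
    exact v.mul_inv
  refine ⟨Y * d, Unitary.mem_iff.2 ⟨h1, h2⟩, c, cfc_predicate _ _, ?_⟩
  rw [mul_assoc, hdcc, mul_one, hY, sub_add_cancel_left, norm_neg, norm_algebraMap']
  simpa [abs_of_pos ht0] using htε

end FiniteDim

section MkLp

variable {A : ℕ → Type u} [∀ n, CStarAlgebra (A n)]

/-- A bounded sequence, as an element of the product. -/
def mkLp (f : ∀ n, A n) (C : ℝ) (h : ∀ n, ‖f n‖ ≤ C) : lp A ∞ :=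
  ⟨f, memℓp_infty ⟨C, by rintro _ ⟨n, rfl⟩; exact h n⟩⟩

theorem mkLp_apply (f : ∀ n, A n) (C : ℝ) (h : ∀ n, ‖f n‖ ≤ C) (n : ℕ) :
    mkLp f C h n = f n := rfl

theorem lp_ext {a b : lp A ∞} (h : ∀ n, a n = b n) : a = b := lp.ext (funext h)

end MkLp

section Lp

variable {A : ℕ → Type u} [∀ n, CStarAlgebra (A n)] [∀ n, Nontrivial (A n)]

variable (A) in
/-- Evaluation at an index. -/
noncomputable def ev (n : ℕ) : lp A ∞ →⋆ₐ[ℂ] A n where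
  toFun a := a n
  map_one' := rfl
  map_mul' _ _ := rfl
  map_zero' := rfl
  map_add' _ _ := rfl
  commutes' _ := rfl
  map_star' _ := rfl

theorem ev_apply (n : ℕ) (a : lp A ∞) : ev A n a = a n := rfl

theorem continuous_ev (n : ℕ) : Continuous (ev A n) :=
  (lp.evalCLM ℂ A ∞ n).continuous

end Lp

/-! ### Polar decompositions and cuts of unitaries in the quotient -/

section Squares

variable {A : Type*} [CStarAlgebra A]

theorem isUnit_sq_add {s : A} (hs : IsSelfAdjoint s) {t : ℝ} (ht : 0 < t) :
    IsUnit (s * s + algebraMap ℝ A t) := by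
  have h : s * s + algebraMap ℝ A t = cfc (fun x : ℝ => x * x + t) s := by
    rw [cfc_add_const t (fun x : ℝ => x * x) s (by fun_prop),
      cfc_mul (fun x : ℝ => x) (fun x : ℝ => x) s (by fun_prop) (by fun_prop), cfc_id' ℝ s]
  rw [h, isUnit_cfc_iff _ _ (by fun_prop)]
  intro x _
  nlinarith [mul_self_nonneg x]

/-- A square of a self-adjoint element is the square root of its square. -/
theorem sq_eq_cfc_sqrt {s : A} (hs : IsSelfAdjoint s) :
    s * s = cfc (fun x : ℝ => √x) (s * s * (s * s)) := by
  have h1 : s * s = cfc (fun x : ℝ => x * x) s := by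
    rw [cfc_mul (fun x : ℝ => x) (fun x : ℝ => x) s (by fun_prop) (by fun_prop), cfc_id' ℝ s]
  have h2 : s * s * (s * s) = cfc (fun x : ℝ => x * x * (x * x)) s := by
    rw [cfc_mul (fun x : ℝ => x * x) (fun x : ℝ => x * x) s (by fun_prop) (by fun_prop), ← h1]
  rw [h2, ← cfc_comp' (fun x : ℝ => √x) (fun x : ℝ => x * x * (x * x)) s (by fun_prop)
    (by fun_prop)]
  conv_lhs => rw [h1]
  refine cfc_congr fun x _ => ?_
  exact (Real.sqrt_mul_self (mul_self_nonneg x)).symm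

end Squares

section Lift

variable {A : ℕ → Type u} [∀ n, CStarAlgebra (A n)] [∀ n, Nontrivial (A n)]
  {Q : Type u} [CStarAlgebra Q] {π : lp A ∞ →⋆ₐ[ℂ] Q}

theorem map_congr (h0 : ∀ a : lp A ∞, Tendsto (fun n => ‖a n‖) atTop (𝓝 0) → π a = 0)
    {a b : lp A ∞} (h : Tendsto (fun n => ‖a n - b n‖) atTop (𝓝 0)) : π a = π b := by
  rw [← sub_eq_zero, ← map_sub]
  exact h0 _ (by simpa using h)

variable [∀ n, FiniteDimensional ℂ (A n)]

/-- Coordinatewise approximate polar decompositions, with errors tending to zero. -/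
theorem polar_lift (h0 : ∀ a : lp A ∞, Tendsto (fun n => ‖a n‖) atTop (𝓝 0) → π a = 0)
    (X : lp A ∞) :
    ∃ U ∈ unitary (lp A ∞), ∃ S : lp A ∞, IsSelfAdjoint S ∧ π X = π (U * (S * S)) := by
  choose u hu s hs h using fun n => polar_finite (X n) (Nat.one_div_pos_of_nat (α := ℝ) (n := n))
  have hu1 : ∀ n, ‖u n‖ ≤ 1 := fun n => (CStarRing.norm_of_mem_unitary (hu n)).le
  have hsb : ∀ n, ‖s n‖ ≤ ‖X‖ + 2 := fun n => by
    have e1 : ‖s n * s n‖ = ‖s n‖ * ‖s n‖ := by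
      conv_lhs => rw [← (hs n).star_eq]
      rw [(hs n).star_eq, ← CStarRing.norm_star_mul_self (x := s n), (hs n).star_eq]
    have e2 : ‖u n * (s n * s n)‖ = ‖s n * s n‖ := CStarRing.norm_mem_unitary_mul _ (hu n)
    have e3 := h n
    have e4 : (1 : ℝ) / (n + 1) ≤ 1 := by
      rw [div_le_one (by positivity)]
      linarith [n.cast_nonneg (α := ℝ)]
    have e5 : ‖X n‖ ≤ ‖X‖ := lp.norm_apply_le_norm ENNReal.top_ne_zero X n
    have e6 : ‖u n * (s n * s n)‖ ≤ ‖X n‖ + ‖X n - u n * (s n * s n)‖ := by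
      rw [norm_sub_rev]
      exact norm_le_norm_add_norm_sub' _ _
    nlinarith [norm_nonneg (s n), norm_nonneg X]
  refine ⟨mkLp u 1 hu1, Unitary.mem_iff.2 ⟨lp_ext fun n => (Unitary.mem_iff.1 (hu n)).1,
    lp_ext fun n => (Unitary.mem_iff.1 (hu n)).2⟩, mkLp s _ hsb, lp_ext fun n => hs n, ?_⟩
  refine map_congr h0 ?_
  exact squeeze_zero (fun n => norm_nonneg _) h tendsto_one_div_add_atTop_nhds_zero_nat

/-- In the quotient every element has an exact polar decomposition with a unitary phase. This is the
property which makes normal elements of the quotient behave like those of finite-dimensional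
algebras. -/
theorem polar_quot (hs : Function.Surjective π)
    (h0 : ∀ a : lp A ∞, Tendsto (fun n => ‖a n‖) atTop (𝓝 0) → π a = 0) (x : Q) :
    ∃ u ∈ unitary Q, ∃ s : Q, IsSelfAdjoint s ∧ x = u * (s * s) := by
  obtain ⟨X, rfl⟩ := hs x
  obtain ⟨U, hU, S, hS, h⟩ := polar_lift h0 X
  exact ⟨π U, Unitary.map_mem π hU, π S, hS.map π, by simpa using h⟩

/-- In the polar decomposition `π U * (s * s)` of a unitary, `s * s` is a positive unitary, hence `1`. -/
theorem unitary_lift (hs : Function.Surjective π)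
    (h0 : ∀ a : lp A ∞, Tendsto (fun n => ‖a n‖) atTop (𝓝 0) → π a = 0) {w : Q}
    (hw : w ∈ unitary Q) : ∃ W ∈ unitary (lp A ∞), π W = w := by
  obtain ⟨X, rfl⟩ := hs w
  obtain ⟨U, hU, S, hS, h⟩ := polar_lift h0 X
  refine ⟨U, hU, ?_⟩
  have hπU : π U ∈ unitary Q := Unitary.map_mem π hU
  have hsa : IsSelfAdjoint (π S) := hS.map π
  rw [map_mul, map_mul] at h
  set s := π S
  have e1 : star (π U) * π X = s * s := by
    rw [h, ← mul_assoc, (Unitary.mem_iff.1 hπU).1, one_mul]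
  have e2 : s * s ∈ unitary Q := e1 ▸ mul_mem (Unitary.star_mem hπU) hw
  have e3 : s * s * (s * s) = 1 := by
    have := (Unitary.mem_iff.1 e2).1
    rwa [star_mul, hsa.star_eq] at this
  -- `(s * s + 1) * (s * s) = 1 + s * s`, and `s * s + 1` is invertible
  have e4 : s * s = 1 := by
    have h1 := isUnit_sq_add hsa one_pos
    rw [map_one] at h1
    refine h1.mul_right_cancel ?_
    rw [mul_add, e3, one_mul, mul_one, add_comm]
  rw [h, e4, mul_one]

theorem sphere_of_unitary {B : Type*} [CStarAlgebra B] {w : B} (hw : w ∈ unitary B) :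
    spectrum ℂ w ⊆ Metric.sphere (0 : ℂ) 1 := by
  intro z hz
  exact spectrum.subset_circle_of_unitary hw hz

/-- Discontinuous functional calculus of a unitary `w` in the quotient: `m` plays the role of
`κ(w)` and obeys the multiplicative relations with the continuous functions of `w` which the values
of `κ` dictate. It comes from the functional calculus of the coordinates of a unitary lift, where
every function is allowed since spectra are finite. -/
theorem exists_borel (hs : Function.Surjective π) (hc : Continuous π)
    (h0 : ∀ a : lp A ∞, Tendsto (fun n => ‖a n‖) atTop (𝓝 0) → π a = 0) {w : Q}
    (hw : w ∈ unitary Q) (κ : ℂ → ℂ) (C : ℝ) (hC : ∀ z, ‖κ z‖ ≤ C)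
    (hκ : ∀ z, star (κ z) = κ z) :
    ∃ m : Q, IsSelfAdjoint m ∧
      (∀ h θ : ℂ → ℂ, ContinuousOn h (Metric.sphere 0 1) → ContinuousOn θ (Metric.sphere 0 1) →
        (∀ z ∈ Metric.sphere (0 : ℂ) 1, h z * κ z = θ z) →
        m * cfc h w = cfc θ w ∧ cfc h w * m = cfc θ w) ∧
      (∀ θ : ℂ → ℂ, ContinuousOn θ (Metric.sphere 0 1) →
        (∀ z ∈ Metric.sphere (0 : ℂ) 1, κ z * κ z = κ z - θ z) → m * m = m - cfc θ w) ∧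
      (∀ φ : ℂ → ℂ, ContinuousOn φ (Metric.sphere 0 1) →
        (∀ z ∈ Metric.sphere (0 : ℂ) 1, κ z * φ z = κ z) →
        m * cfc φ w = m ∧ cfc φ w * m = m) := by
  obtain ⟨W, hW, rfl⟩ := unitary_lift hs h0 hw
  have hWn : ∀ n, W n ∈ unitary (A n) := fun n => Unitary.map_mem (ev A n) hW
  have hN : ∀ n, IsStarNormal (W n) := fun n => isStarNormal_of_mem_unitary (hWn n)
  have hNW : IsStarNormal W := isStarNormal_of_mem_unitary hW
  have hNw : IsStarNormal (π W) := isStarNormal_of_mem_unitary hw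
  have hC0 : 0 ≤ C := (norm_nonneg _).trans (hC 0)
  have hsub := fun n => sphere_of_unitary (hWn n)
  set M : lp A ∞ := mkLp (fun n => cfc κ (W n)) C
    (fun n => norm_cfc_le hC0 fun z _ => hC z) with hM
  have key : ∀ h : ℂ → ℂ, ContinuousOn h (Metric.sphere 0 1) →
      cfc h (π W) = π (cfc h W) ∧ ∀ n, (cfc h W : lp A ∞) n = cfc h (W n) := by
    intro h hh
    refine ⟨(StarAlgHomClass.map_cfc π h W (hh.mono (sphere_of_unitary hW)) hc).symm, fun n => ?_⟩
    exact StarAlgHomClass.map_cfc (ev A n) h W (hh.mono (sphere_of_unitary hW)) (continuous_ev n)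
      hNW (hN n)
  refine ⟨π M, IsSelfAdjoint.map (lp_ext fun n => ?_) π, ?_, ?_, ?_⟩
  · change star (cfc κ (W n)) = cfc κ (W n)
    rw [← cfc_star]
    simp only [hκ]
  · intro h θ hh hθ hz
    rw [(key h hh).1, (key θ hθ).1, ← map_mul, ← map_mul]
    refine ⟨congrArg π (lp_ext fun n => ?_), congrArg π (lp_ext fun n => ?_)⟩
    · change cfc κ (W n) * (cfc h W : lp A ∞) n = (cfc θ W : lp A ∞) n
      rw [(key h hh).2, (key θ hθ).2, ← cfc_mul _ _ _ (contOn _ _) (contOn _ _)]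
      refine cfc_congr fun z hz' => ?_
      rw [mul_comm, hz z (hsub n hz')]
    · change (cfc h W : lp A ∞) n * cfc κ (W n) = (cfc θ W : lp A ∞) n
      rw [(key h hh).2, (key θ hθ).2, ← cfc_mul _ _ _ (contOn _ _) (contOn _ _)]
      exact cfc_congr fun z hz' => hz z (hsub n hz')
  · intro θ hθ hz
    rw [(key θ hθ).1, ← map_mul, ← map_sub]
    refine congrArg π (lp_ext fun n => ?_)
    change cfc κ (W n) * cfc κ (W n) = cfc κ (W n) - (cfc θ W : lp A ∞) n
    rw [(key θ hθ).2, ← cfc_mul _ _ _ (contOn _ _) (contOn _ _),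
      ← cfc_sub _ _ _ (contOn _ _) (contOn _ _)]
    exact cfc_congr fun z hz' => hz z (hsub n hz')
  · intro h hh hz
    rw [(key h hh).1, ← map_mul, ← map_mul]
    refine ⟨congrArg π (lp_ext fun n => ?_), congrArg π (lp_ext fun n => ?_)⟩
    · change cfc κ (W n) * (cfc h W : lp A ∞) n = cfc κ (W n)
      rw [(key h hh).2, ← cfc_mul _ _ _ (contOn _ _) (contOn _ _)]
      exact cfc_congr fun z hz' => hz z (hsub n hz')
    · change (cfc h W : lp A ∞) n * cfc κ (W n) = cfc κ (W n)
      rw [(key h hh).2, ← cfc_mul _ _ _ (contOn _ _) (contOn _ _)]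
      refine cfc_congr fun z hz' => ?_
      rw [mul_comm, hz z (hsub n hz')]

end Lift

/-! ### Lifting commuting pairs with integer spectrum -/

section Pair

variable {A : Type*} [CStarAlgebra A]

theorem isStarNormal_add_I {a b : A} (ha : IsSelfAdjoint a) (hb : IsSelfAdjoint b)
    (h : Commute a b) : IsStarNormal (a + Complex.I • b) := by
  refine ⟨?_⟩
  have h1 : star (a + Complex.I • b) = a - Complex.I • b := by
    rw [star_add, star_smul, ha.star_eq, hb.star_eq]
    simp [sub_eq_add_neg]
  rw [h1]
  have h2 : Commute a (Complex.I • b) := h.smul_right _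
  exact ((Commute.refl a).add_right h2).sub_left (h2.symm.add_right (Commute.refl _))

end Pair

section Lift

variable {A : ℕ → Type u} [∀ n, CStarAlgebra (A n)] [∀ n, Nontrivial (A n)]
  {Q : Type u} [CStarAlgebra Q] {π : lp A ∞ →⋆ₐ[ℂ] Q}

theorem selfAdjoint_lift (hs : Function.Surjective π) {a : Q} (ha : IsSelfAdjoint a) :
    ∃ X : lp A ∞, IsSelfAdjoint X ∧ π X = a := by
  obtain ⟨X, rfl⟩ := hs a
  refine ⟨(2⁻¹ : ℂ) • (X + star X), ?_, ?_⟩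
  · rw [IsSelfAdjoint, star_smul, star_add, star_star, add_comm]
    simp
  · rw [map_smul, map_add, map_star, ha.star_eq, ← two_smul ℂ (π X), smul_smul]
    norm_num

theorem tendsto_of_map_eq_zero (h1 : ∀ (a : lp A ∞) r, ‖π a‖ < r → ∀ᶠ n in atTop, ‖a n‖ < r)
    {X : lp A ∞} (hX : π X = 0) : Tendsto (fun n => ‖X n‖) atTop (𝓝 0) := by
  rw [Metric.tendsto_nhds]
  intro ε hε
  filter_upwards [h1 X ε (by simpa [hX] using hε)] with n hn
  simpa using hn

variable [∀ n, FiniteDimensional ℂ (A n)]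

set_option maxHeartbeats 2000000 in
/-- A commuting pair of self-adjoint elements of the quotient, the first of which has integer
spectrum, lifts to a commuting pair. The integer spectrum allows the first element to be lifted with
its spectral projections; the second one is then compressed to the block diagonal. -/
theorem exists_normal_lift (hs : Function.Surjective π) (hc : Continuous π)
    (h0 : ∀ a : lp A ∞, Tendsto (fun n => ‖a n‖) atTop (𝓝 0) → π a = 0)
    (h1 : ∀ (a : lp A ∞) r, ‖π a‖ < r → ∀ᶠ n in atTop, ‖a n‖ < r)
    {a b : Q} (ha : IsSelfAdjoint a) (hb : IsSelfAdjoint b) (hab : Commute a b)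
    (hint : spectrum ℝ a ⊆ Set.range ((↑) : ℤ → ℝ)) :
    ∃ Y : lp A ∞, (∀ n, IsStarNormal (Y n)) ∧ π Y = a + Complex.I • b := by
  obtain ⟨X, hX, hXa⟩ := selfAdjoint_lift hs ha
  obtain ⟨Z, hZ, hZb⟩ := selfAdjoint_lift hs hb
  have hXn : ∀ n, IsSelfAdjoint (X n) := fun n => hX.map (ev A n)
  have hXb : ∀ n, ‖X n‖ ≤ ‖X‖ := lp.norm_apply_le_norm ENNReal.top_ne_zero X
  have hspec : ∀ n, ∀ t ∈ spectrum ℝ (X n), |t| ≤ ‖X‖ := fun n t ht =>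
    (spectrum.norm_le_norm_of_mem ht).trans (hXb n)
  have hround : ∀ t : ℝ, |(round t : ℝ) - t| ≤ 1 / 2 := fun t => by
    rw [abs_sub_comm]; exact abs_sub_round t
  -- the coordinates are rounded to integer spectrum
  set R : lp A ∞ := mkLp (fun n => cfc (fun t : ℝ => (round t : ℝ)) (X n)) (‖X‖ + 1) (fun n =>
    norm_cfc_le (by positivity) fun t ht => by
      have := hspec n t ht
      have := hround t
      rw [Real.norm_eq_abs]
      rw [abs_le] at *
      constructor <;> linarith) with hR
  have hRX : π R = a := by
    rw [← hXa]
    refine map_congr h0 ?_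
    -- rounding is discontinuous, but its error is the continuous function `f`, which vanishes on
    -- the integers and hence on the spectrum of `a`
    set f : ℝ → ℝ := fun t => Metric.infDist t (Set.range ((↑) : ℤ → ℝ)) with hf
    have hfc : Continuous f := Metric.continuous_infDist_pt _
    set g : ℂ → ℂ := fun z => (f z.re : ℂ) with hg
    have hgc : Continuous g := by fun_prop
    have hD : π (cfc g X) = 0 := by
      rw [StarAlgHomClass.map_cfc (S := ℂ) π g X hgc.continuousOn hc, hXa,
        ← cfc_real_eq_complex f ha, ← cfc_zero ℝ a]
      exact cfc_congr fun t ht => Metric.infDist_zero_of_mem (hint ht)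
    refine squeeze_zero (fun n => norm_nonneg _) (fun n => ?_) (tendsto_of_map_eq_zero h1 hD)
    have e1 : (cfc g X : lp A ∞) n = cfc f (X n) := by
      rw [cfc_real_eq_complex f (hXn n)]
      exact StarAlgHomClass.map_cfc (S := ℂ) (ev A n) g X hgc.continuousOn (continuous_ev n)
        hX.isStarNormal (hXn n).isStarNormal
    have e2 : R n - X n = cfc (fun t : ℝ => (round t : ℝ) - t) (X n) := by
      rw [cfc_sub _ _ _ (contOn_real _ _) (contOn_real _ _), cfc_id' ℝ (X n)]
      rfl
    rw [e1, e2]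
    refine norm_cfc_le (norm_nonneg _) fun t ht => ?_
    refine le_trans ?_ (norm_apply_le_norm_cfc f (X n) ht (contOn_real _ _))
    rw [Real.norm_eq_abs, Real.norm_eq_abs, abs_of_nonneg Metric.infDist_nonneg]
    refine (Metric.le_infDist (Set.range_nonempty _)).2 ?_
    rintro _ ⟨k, rfl⟩
    rw [abs_sub_comm, Real.dist_eq]
    exact round_le t k
  obtain ⟨L, hL⟩ := exists_nat_ge (‖X‖ + 1)
  set J : Finset ℤ := Finset.Icc (-(L : ℤ)) L
  -- `E j` is the spectral projection of `R` for the value `j`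
  set ind : ℤ → ℝ → ℝ := fun j t => if round t = j then 1 else 0
  set E : ℤ → lp A ∞ := fun j => mkLp (fun n => cfc (ind j) (X n)) 1 (fun n =>
    norm_cfc_le zero_le_one fun t _ => by
      simp only [ind]; split_ifs <;> simp) with hE
  have hEn : ∀ j n, E j n = cfc (ind j) (X n) := fun j n => rfl
  have hRn : ∀ n, R n = cfc (fun t : ℝ => (round t : ℝ)) (X n) := fun n => rfl
  have hEsa : ∀ j, IsSelfAdjoint (E j) := fun j => lp_ext fun n => cfc_predicate (ind j) (X n)
  have hRsa : IsSelfAdjoint R := lp_ext fun n =>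
    cfc_predicate (fun t : ℝ => (round t : ℝ)) (X n)
  have hsum : ∑ j ∈ J, E j = 1 := by
    refine lp_ext fun n => ?_
    change ev A n (∑ j ∈ J, E j) = 1
    rw [map_sum]
    change ∑ j ∈ J, cfc (ind j) (X n) = 1
    rw [← cfc_sum (fun j => ind j) (X n) J (fun _ _ => contOn_real _ _), ← cfc_const_one ℝ (X n)]
    refine cfc_congr fun t ht => ?_
    have h2 : round t ∈ J := by
      have := hspec n t ht
      have := hround t
      rw [abs_le] at *
      rw [Finset.mem_Icc]
      constructor
      · have : -(L : ℝ) ≤ round t := by linarith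
        exact_mod_cast this
      · have : (round t : ℝ) ≤ L := by linarith
        exact_mod_cast this
    simp [ind, h2]
  have hRE : ∀ j, R * E j = (j : ℂ) • E j := fun j => lp_ext fun n => by
    change R n * E j n = (j : ℂ) • E j n
    have e : (j : ℂ) • E j n = (j : ℝ) • E j n := by
      rw [← Complex.coe_smul]; simp
    rw [e, hRn, hEn, ← cfc_mul _ _ _ (contOn_real _ _) (contOn_real _ _),
      ← cfc_smul _ _ _ (contOn_real _ _)]
    refine cfc_congr fun t _ => ?_
    by_cases h : round t = j <;> simp [ind, h]
  have hER : ∀ j, E j * R = (j : ℂ) • E j := fun j => by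
    have := congrArg star (hRE j)
    rw [star_mul, star_smul, (hEsa j).star_eq, hRsa.star_eq] at this
    simpa using this
  set D : lp A ∞ := ∑ j ∈ J, E j * Z * E j
  have hDsa : IsSelfAdjoint D := by
    refine isSelfAdjoint_sum _ fun j _ => ?_
    have := hZ.conjugate (E j)
    rwa [(hEsa j).star_eq] at this
  have hRD : Commute R D := by
    refine Commute.sum_right _ _ _ fun j _ => ?_
    rw [Commute, SemiconjBy, ← mul_assoc, ← mul_assoc, hRE, mul_assoc (E j * Z), hER]
    simp
  refine ⟨R + Complex.I • D, fun n => ?_, ?_⟩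
  · have := isStarNormal_add_I hRsa hDsa hRD
    exact this.map (ev A n)
  have hπsum : ∑ j ∈ J, π (E j) = 1 := by rw [← map_sum, hsum, map_one]
  have haE : ∀ j, a * π (E j) = (j : ℂ) • π (E j) := fun j => by
    rw [← hRX, ← map_mul, hRE, map_smul]
  have hEa : ∀ j, π (E j) * a = (j : ℂ) • π (E j) := fun j => by
    rw [← hRX, ← map_mul, hER, map_smul]
  -- `b` commutes with `a`, so its off-diagonal blocks vanish in the quotient
  have hoff : ∀ i j, i ≠ j → π (E i) * b * π (E j) = 0 := fun i j hij => by
    have e1 : π (E i) * a * b * π (E j) = (i : ℂ) • (π (E i) * b * π (E j)) := by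
      rw [hEa]; simp
    have e2 : π (E i) * a * b * π (E j) = (j : ℂ) • (π (E i) * b * π (E j)) := by
      rw [mul_assoc (π (E i)), hab.eq, ← mul_assoc, mul_assoc _ a, haE]; simp
    have e3 : ((i : ℂ) - j) • (π (E i) * b * π (E j)) = 0 := by
      rw [sub_smul, ← e1, ← e2, sub_self]
    refine (smul_eq_zero.1 e3).resolve_left ?_
    exact fun h => hij (by exact_mod_cast sub_eq_zero.1 h)
  have hπD : π D = b := by
    have : b = (∑ i ∈ J, π (E i)) * b * ∑ j ∈ J, π (E j) := by rw [hπsum]; simp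
    rw [this, map_sum, Finset.sum_mul, Finset.sum_mul]
    refine Finset.sum_congr rfl fun i hi => ?_
    rw [Finset.mul_sum, Finset.sum_eq_single_of_mem i hi fun j _ hj => hoff i j hj.symm, map_mul,
      map_mul, hZb]
  rw [map_add, map_smul, hRX, hπD]

end Lift

/-! ### Unit segments and functions on the circle -/

section Geometry

/-- A piecewise linear cut-off, equal to `1` for `r ≤ -(s+1)/4` and to `0` for `r ≥ -s/4`. -/
noncomputable def bump (s r : ℝ) : ℝ := max 0 (min 1 (-4 * r - s))

theorem continuous_bump (s : ℝ) : Continuous (bump s) := by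
  unfold bump; fun_prop

theorem bump_nonneg (s r : ℝ) : 0 ≤ bump s r := le_max_left _ _

theorem bump_le_one (s r : ℝ) : bump s r ≤ 1 := max_le zero_le_one (min_le_left _ _)

theorem bump_eq_zero {s r : ℝ} (h : -4 * r ≤ s) : bump s r = 0 :=
  max_eq_left ((min_le_right _ _).trans (by linarith))

theorem bump_eq_one {s r : ℝ} (h : s + 1 ≤ -4 * r) : bump s r = 1 := by
  rw [bump, min_eq_left (by linarith), max_eq_right zero_le_one]

/-- The vector field whose direction winds once around the two ends `j + ik` and `j + i(k+1)` of a
unit segment, in opposite senses; it points in the direction `-1` exactly on the open segment. -/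
noncomputable def segVec (l : ℤ × ℤ) (z : ℂ) : ℂ :=
  ⟨(z.re - l.1) ^ 2 + (z.im - l.2) ^ 2 - (z.im - l.2), z.re - l.1⟩

/-- The direction of `segVec`, a point of the unit circle. -/
noncomputable def seg (l : ℤ × ℤ) (z : ℂ) : ℂ := segVec l z / (‖segVec l z‖ : ℂ)

theorem continuous_segVec (l : ℤ × ℤ) : Continuous (segVec l) := by
  have : segVec l = fun z : ℂ => (((z.re - l.1) ^ 2 + (z.im - l.2) ^ 2 - (z.im - l.2) : ℝ) : ℂ) +
      ((z.re - l.1 : ℝ) : ℂ) * Complex.I := by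
    funext z
    apply Complex.ext
    · simp only [segVec, Complex.add_re, Complex.ofReal_re, Complex.re_ofReal_mul, Complex.I_re,
        mul_zero, add_zero]
    · simp only [segVec, Complex.add_im, Complex.ofReal_im, Complex.im_ofReal_mul, Complex.I_im,
        mul_one, zero_add]
  rw [this]
  fun_prop

theorem seg_re (l : ℤ × ℤ) (z : ℂ) : (seg l z).re = (segVec l z).re / ‖segVec l z‖ := by
  rw [seg, Complex.div_ofReal_re]

theorem seg_im (l : ℤ × ℤ) (z : ℂ) : (seg l z).im = (segVec l z).im / ‖segVec l z‖ := by
  rw [seg, Complex.div_ofReal_im]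

/-- `z` is neither of the end points of the unit segment with index `l = (j, k)`, which joins `j + ik`
to `j + i(k+1)`. -/
def Avoids (l : ℤ × ℤ) (z : ℂ) : Prop :=
  z ≠ (l.1 : ℂ) + l.2 * Complex.I ∧ z ≠ (l.1 : ℂ) + ((l.2 + 1 : ℤ) : ℂ) * Complex.I

theorem segVec_ne_zero {l : ℤ × ℤ} {z : ℂ} (h : Avoids l z) : segVec l z ≠ 0 := by
  intro h0
  have h1 : z.re - l.1 = 0 := by simpa [segVec] using congrArg Complex.im h0
  have h2 : (z.re - l.1) ^ 2 + (z.im - l.2) ^ 2 - (z.im - l.2) = 0 := by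
    simpa only [segVec, Complex.zero_re] using congrArg Complex.re h0
  have h3 : (z.im - l.2) * (z.im - l.2 - 1) = 0 := by
    rw [h1] at h2; linarith
  rcases mul_eq_zero.1 h3 with h4 | h4
  · refine h.1 (Complex.ext ?_ ?_)
    · simp; linarith
    · simp; linarith
  · refine h.2 (Complex.ext ?_ ?_)
    · simp; linarith
    · simp; linarith

theorem norm_seg {l : ℤ × ℤ} {z : ℂ} (h : Avoids l z) : ‖seg l z‖ = 1 := by
  have := norm_ne_zero_iff.2 (segVec_ne_zero h)
  simp [seg, this]

theorem continuousOn_seg {l : ℤ × ℤ} {K : Set ℂ} (h : ∀ z ∈ K, Avoids l z) :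
    ContinuousOn (seg l) K := by
  refine (continuous_segVec l).continuousOn.div ?_ ?_
  · exact (Complex.continuous_ofReal.comp (continuous_segVec l).norm).continuousOn
  · intro z hz
    simpa using segVec_ne_zero (h z hz)

/-- Where `seg l` lies in the left half plane, `z` is in the disk with diameter the segment. -/
theorem disk_of_neg {l : ℤ × ℤ} {z : ℂ} (h : (seg l z).re < 0) :
    |z.re - l.1| < 1 / 2 ∧ 0 < z.im - l.2 ∧ z.im - l.2 < 1 := by
  rw [seg_re] at h
  have h1 : (segVec l z).re < 0 := by
    by_contra! h'
    exact absurd h (not_lt.2 (div_nonneg h' (norm_nonneg _)))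
  simp only [segVec] at h1
  refine ⟨?_, ?_, ?_⟩
  · rw [abs_lt]
    constructor <;> nlinarith [sq_nonneg (z.im - l.2 - 1 / 2)]
  · nlinarith [sq_nonneg (z.re - l.1), sq_nonneg (z.im - l.2)]
  · nlinarith [sq_nonneg (z.re - l.1), sq_nonneg (z.im - l.2)]

/-- The disks whose diameters are distinct unit segments of vertical grid lines are disjoint. -/
theorem unique_of_neg {l l' : ℤ × ℤ} {z : ℂ} (h : (seg l z).re < 0) (h' : (seg l' z).re < 0) :
    l = l' := by
  obtain ⟨h1, h2, h3⟩ := disk_of_neg h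
  obtain ⟨h1', h2', h3'⟩ := disk_of_neg h'
  rw [abs_lt] at h1 h1'
  have e1 : l.1 < l'.1 + 1 := by
    have : (l.1 : ℝ) < l'.1 + 1 := by linarith
    exact_mod_cast this
  have e2 : l'.1 < l.1 + 1 := by
    have : (l'.1 : ℝ) < l.1 + 1 := by linarith
    exact_mod_cast this
  have e3 : l.2 < l'.2 + 1 := by
    have : (l.2 : ℝ) < l'.2 + 1 := by linarith
    exact_mod_cast this
  have e4 : l'.2 < l.2 + 1 := by
    have : (l'.2 : ℝ) < l.2 + 1 := by linarith
    exact_mod_cast this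
  exact Prod.ext (by omega) (by omega)

/-- `seg l` takes the right side of the grid line to the upper half circle. -/
theorem seg_im_pos {l : ℤ × ℤ} {z : ℂ} (h : Avoids l z) : 0 < (seg l z).im ↔ (l.1 : ℝ) < z.re := by
  rw [seg_im, div_pos_iff_of_pos_right (norm_pos_iff.2 (segVec_ne_zero h))]
  simp [segVec]

/-- On the segment itself the value of `seg` is `-1`. -/
theorem seg_re_eq {l : ℤ × ℤ} {z : ℂ} (h : Avoids l z) (hre : z.re = l.1) (hfl : ⌊z.im⌋ = l.2) :
    (seg l z).re = -1 := by
  have hv := norm_ne_zero_iff.2 (segVec_ne_zero h)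
  have h0 : z.re - l.1 = 0 := by linarith
  have h1 : (l.2 : ℝ) ≤ z.im := hfl ▸ Int.floor_le z.im
  have h2 : z.im < l.2 + 1 := hfl ▸ Int.lt_floor_add_one z.im
  have e : segVec l z = (((z.im - l.2) ^ 2 - (z.im - l.2) : ℝ) : ℂ) := by
    apply Complex.ext
    · simp only [segVec, h0, Complex.ofReal_re]; ring
    · simp only [segVec, h0, Complex.ofReal_im]
  rw [seg_re, e, Complex.norm_real, Complex.ofReal_re, Real.norm_eq_abs,
    abs_of_nonpos (by nlinarith)]
  rw [e, Complex.norm_real, Real.norm_eq_abs, abs_of_nonpos (by nlinarith)] at hv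
  rw [div_neg, div_self]
  exact fun h => hv (by rw [h, neg_zero])

/-- Cutting off along `q > 0` preserves continuity if the function vanishes on `q = 0`. -/
theorem continuousOn_cut {K : Set ℂ} {q : ℂ → ℝ} (hq : Continuous q) {u : ℂ → ℂ}
    (hu : ContinuousOn u K) (h0 : ∀ z ∈ K, q z = 0 → u z = 0) :
    ContinuousOn (fun z => if 0 < q z then u z else 0) K := by
  refine ContinuousOn.if ?_ (hu.mono Set.inter_subset_left) continuousOn_const
  rintro z ⟨hz, hf⟩
  exact h0 z hz (frontier_lt_subset_eq continuous_const hq hf).symm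

/-- A cut-off on the upper half circle, with its single discontinuity at `-1`, where it jumps from `1`
to `0`. -/
noncomputable def kap (w : ℂ) : ℂ := if 0 < w.im then (bump 2 w.re : ℂ) else 0

/-- The defect of idempotency of `kap`; it is continuous on the circle. -/
noncomputable def thet (w : ℂ) : ℂ :=
  if 0 < w.im then ((bump 2 w.re * (1 - bump 2 w.re) : ℝ) : ℂ) else 0

/-- For `Re w ≤ -1/4` this is the indicator of `Im w > 0` minus `kap w`; it is continuous on the
circle. -/
noncomputable def eta (w : ℂ) : ℂ :=
  if 0 < w.im then ((bump 0 w.re * (1 - bump 2 w.re) : ℝ) : ℂ) else 0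

theorem circle_real {w : ℂ} (hw : w ∈ Metric.sphere (0 : ℂ) 1) (h : w.im = 0) :
    w.re = 1 ∨ w.re = -1 := by
  have : ‖w‖ = 1 := by simpa using hw
  have h2 : w.re * w.re + w.im * w.im = 1 := by
    rw [← Complex.normSq_apply, Complex.normSq_eq_norm_sq, this, one_pow]
  rw [h] at h2
  exact mul_self_eq_one_iff.1 (by linarith)

theorem continuousOn_thet : ContinuousOn thet (Metric.sphere 0 1) := by
  have := continuous_bump 2
  refine continuousOn_cut Complex.continuous_im (by fun_prop) fun w hw h => ?_
  rcases circle_real hw h with h | h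
  · simp [h, bump_eq_zero (show -4 * (1 : ℝ) ≤ 2 by norm_num)]
  · simp [h, bump_eq_one (show (2 : ℝ) + 1 ≤ -4 * (-1) by norm_num)]

theorem continuousOn_eta : ContinuousOn eta (Metric.sphere 0 1) := by
  have := continuous_bump 2
  have := continuous_bump 0
  refine continuousOn_cut Complex.continuous_im (by fun_prop) fun w hw h => ?_
  rcases circle_real hw h with h | h
  · simp [h, bump_eq_zero (show -4 * (1 : ℝ) ≤ 0 by norm_num)]
  · simp [h, bump_eq_one (show (2 : ℝ) + 1 ≤ -4 * (-1) by norm_num)]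

theorem bump_absorb {s t : ℝ} (h : s + 1 ≤ t) (r : ℝ) : bump t r * bump s r = bump t r := by
  rcases le_total (-4 * r) t with h' | h'
  · rw [bump_eq_zero h', zero_mul]
  · rw [bump_eq_one (s := s) (by linarith), mul_one]

theorem norm_kap_le (w : ℂ) : ‖kap w‖ ≤ 1 := by
  unfold kap
  split_ifs
  · rw [Complex.norm_real, Real.norm_eq_abs, abs_of_nonneg (bump_nonneg _ _)]
    exact bump_le_one _ _
  · simp

theorem star_kap (w : ℂ) : star (kap w) = kap w := by
  unfold kap
  split_ifs <;> simp

theorem kap_mul_kap (w : ℂ) : kap w * kap w = kap w - thet w := by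
  unfold kap thet
  split_ifs
  · push_cast; ring
  · simp

theorem eta_mul_kap (w : ℂ) : eta w * kap w = thet w := by
  unfold kap thet eta
  split_ifs
  · rw [← Complex.ofReal_mul]
    congr 1
    have := bump_absorb (s := 0) (t := 2) (by norm_num) w.re
    linear_combination (1 - bump 2 w.re) * this
  · simp

theorem kap_mul_bump (w : ℂ) : kap w * (bump 1 w.re : ℂ) = kap w := by
  unfold kap
  split_ifs
  · rw [← Complex.ofReal_mul, bump_absorb (by norm_num)]
  · simp

end Geometry

/-! ### Removing grid points from the spectrum -/

section Punch

variable {Q : Type*} [CStarAlgebra Q]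

/-- If `x - c = u h` is a polar decomposition of a normal element, then `u` commutes with `h`, and
`c + u (h + ε / 2)` is a normal element near `x` without the spectral value `c`. -/
theorem punch_one (hP : ∀ x : Q, ∃ u ∈ unitary Q, ∃ s : Q, IsSelfAdjoint s ∧ x = u * (s * s))
    (x : Q) (hx : IsStarNormal x) (c : ℂ) {ε : ℝ} (hε : 0 < ε) :
    ∃ y : Q, IsStarNormal y ∧ ‖y - x‖ < ε ∧ c ∉ spectrum ℂ y := by
  obtain ⟨u, hu, s, hs, hus⟩ := hP (x - algebraMap ℂ Q c)
  obtain ⟨hu1, hu2⟩ := Unitary.mem_iff.1 hu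
  set h := s * s with hh
  have hsa : IsSelfAdjoint h := by
    have := IsSelfAdjoint.star_mul_self s
    rwa [hs.star_eq] at this
  have hxc : Commute (star (x - algebraMap ℂ Q c)) (x - algebraMap ℂ Q c) := by
    rw [star_sub, ← algebraMap_star_comm]
    exact (hx.star_comm_self.sub_left (Algebra.commutes _ _)).sub_right
      (Algebra.commutes c _).symm
  -- normality of `u * h` says that `h * h = u * (h * h) * star u`
  have hcomm : Commute u (h * h) := by
    have e := hxc.eq
    rw [hus, star_mul, hsa.star_eq] at e
    have e1 : h * h = u * (h * h) * star u := by
      calc h * h = h * (star u * u) * h := by rw [hu1, mul_one]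
        _ = h * star u * (u * h) := by simp only [mul_assoc]
        _ = _ := by rw [e]; simp only [mul_assoc]
    calc u * (h * h) = u * (h * h) * (star u * u) := by rw [hu1, mul_one]
      _ = u * (h * h) * star u * u := by simp only [mul_assoc]
      _ = h * h * u := by rw [← e1]
  have huh : Commute u h := by
    rw [hh, sq_eq_cfc_sqrt hs]
    exact (Commute.cfc_real hcomm.symm _).symm
  have hush : Commute (star u) h := by
    have := huh.star_star
    rwa [hsa.star_eq] at this
  have ht : IsSelfAdjoint (h + algebraMap ℝ Q (ε / 2)) :=
    hsa.add (IsSelfAdjoint.algebraMap Q (IsSelfAdjoint.all _))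
  set g := h + algebraMap ℝ Q (ε / 2) with hg
  have hug : Commute u g := huh.add_right (Algebra.commutes _ _).symm
  have husg : Commute (star u) g := hush.add_right (Algebra.commutes _ _).symm
  have huu : Commute (star u) u := by rw [Commute, SemiconjBy, hu1, hu2]
  refine ⟨algebraMap ℂ Q c + u * g, ⟨?_⟩, ?_, ?_⟩
  · rw [star_add, ← algebraMap_star_comm, star_mul, ht.star_eq]
    have k : Commute (g * star u) (u * g) :=
      (hug.symm.mul_right (Commute.refl g)).mul_left (huu.mul_right husg)
    have hl : ∀ (r : ℂ) (z : Q), Commute (algebraMap ℂ Q r) z := Algebra.commutes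
    exact ((hl _ _).add_left (hl _ _).symm).add_right ((hl _ _).add_left k)
  · have : algebraMap ℂ Q c + u * g - x = u * algebraMap ℝ Q (ε / 2) := by
      rw [hg, mul_add, ← hus]; abel
    rw [this, CStarRing.norm_mem_unitary_mul _ hu]
    rcases subsingleton_or_nontrivial Q with hQ | hQ
    · rw [Subsingleton.elim (algebraMap ℝ Q (ε / 2)) 0, norm_zero]
      exact hε
    · rw [norm_algebraMap', Real.norm_eq_abs, abs_of_pos (half_pos hε)]
      exact half_lt_self hε
  · rw [spectrum.notMem_iff, ← IsUnit.neg_iff, neg_sub, add_sub_cancel_left]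
    exact (Unitary.toUnits ⟨u, hu⟩).isUnit.mul (isUnit_sq_add hs (half_pos hε))

/-- A normal element is a limit of normal elements whose spectra avoid a given finite set. -/
theorem punch (hP : ∀ x : Q, ∃ u ∈ unitary Q, ∃ s : Q, IsSelfAdjoint s ∧ x = u * (s * s))
    (x : Q) (hx : IsStarNormal x) (F : Finset ℂ) {ε : ℝ} (hε : 0 < ε) :
    ∃ y : Q, IsStarNormal y ∧ ‖y - x‖ < ε ∧ ∀ c ∈ F, c ∉ spectrum ℂ y := by
  classical
  induction F using Finset.induction_on generalizing ε with
  | empty => exact ⟨x, hx, by simpa using hε, by simp⟩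
  | insert c F hc ih =>
    obtain ⟨y, hy, hyx, hyF⟩ := ih (half_pos hε)
    have hopen : IsOpen {z : Q | ∀ c ∈ F, c ∉ spectrum ℂ z} := by
      have : {z : Q | ∀ c ∈ F, c ∉ spectrum ℂ z} =
          ⋂ c ∈ F, (fun z => algebraMap ℂ Q c - z) ⁻¹' {z | IsUnit z} := by
        ext z
        simp [spectrum.notMem_iff]
      rw [this]
      exact isOpen_biInter_finset fun c _ => Units.isOpen.preimage (by fun_prop)
    obtain ⟨δ, hδ, hball⟩ := Metric.isOpen_iff.1 hopen y hyF
    obtain ⟨z, hz, hzy, hzc⟩ := punch_one hP y hy c (lt_min hδ (half_pos hε))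
    refine ⟨z, hz, ?_, ?_⟩
    · have := norm_sub_le_norm_sub_add_norm_sub z y x
      have := hzy.trans_le (min_le_right _ _)
      linarith
    · intro d hd
      rcases Finset.mem_insert.1 hd with rfl | hd
      · exact hzc
      · exact hball (by rw [Metric.mem_ball, dist_eq_norm]; exact hzy.trans_le (min_le_left _ _)) d hd

end Punch

/-! ### Cuts along segments -/

section Sums

/-- At most one of the functions `seg (e i)` takes a value in the open left half plane at `z`, so a sum
of functions supported there has at most one nonzero term. -/
theorem sum_seg {ι M : Type*} [AddCommMonoid M] {z : ℂ} {e : ι → ℤ × ℤ}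
    (he : Function.Injective e) (S : Finset ι) {F : ι → M}
    (hF : ∀ i ∈ S, ¬ (seg (e i) z).re < 0 → F i = 0) {i : ι} (hi : i ∈ S)
    (h : (seg (e i) z).re < 0) : ∑ i ∈ S, F i = F i :=
  Finset.sum_eq_single_of_mem i hi fun i' hi' hne => hF i' hi' fun h' =>
    hne (he (unique_of_neg h' h))

theorem sum_seg_zero {ι M : Type*} [AddCommMonoid M] {z : ℂ} {e : ι → ℤ × ℤ}
    (S : Finset ι) {F : ι → M} (hF : ∀ i ∈ S, ¬ (seg (e i) z).re < 0 → F i = 0)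
    (h : ¬ ∃ i ∈ S, (seg (e i) z).re < 0) : ∑ i ∈ S, F i = 0 := by
  push Not at h
  exact Finset.sum_eq_zero fun i hi => hF i hi (not_lt.2 (h i hi))

theorem bump_zero_of_not_neg {s r : ℝ} (hs : 0 ≤ s) (h : ¬ r < 0) : bump s r = 0 :=
  bump_eq_zero (by linarith)

theorem thet_zero_of_not_neg {w : ℂ} (h : ¬ w.re < 0) : thet w = 0 := by
  simp [thet, bump_zero_of_not_neg (s := 2) (by norm_num) h]

end Sums

section Projections

variable {Q : Type*} [CStarAlgebra Q]

/-- Adding a commuting idempotent moves spectral values by `0` or `1`. -/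
theorem int_spectrum_add {s p : Q} (hsp : Commute s p) (hp : p * p = p)
    (hs : spectrum ℝ s ⊆ Set.range ((↑) : ℤ → ℝ)) :
    spectrum ℝ (s + p) ⊆ Set.range ((↑) : ℤ → ℝ) := by
  intro μ hμ
  by_contra hint
  have h0 : μ ∉ spectrum ℝ s := fun h => hint (hs h)
  have h1 : μ - 1 ∉ spectrum ℝ s := fun h => hint <| by
    obtain ⟨k, hk⟩ := hs h
    exact ⟨k + 1, by push_cast; linarith⟩
  rw [spectrum.notMem_iff] at h0 h1
  obtain ⟨U0, hU0⟩ := h0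
  obtain ⟨U1, hU1⟩ := h1
  have hl : ∀ (r : ℝ) (z : Q), Commute (algebraMap ℝ Q r) z := Algebra.commutes
  have c0 : Commute (U0 : Q) p := by rw [hU0]; exact (hl _ _).sub_left hsp
  have c1 : Commute (U1 : Q) p := by rw [hU1]; exact (hl _ _).sub_left hsp
  have c0' : Commute ((U0⁻¹ : Qˣ) : Q) p := c0.units_inv_left
  have c1' : Commute ((U1⁻¹ : Qˣ) : Q) p := c1.units_inv_left
  -- `μ - (s + p)` is `μ - 1 - s` on the range of `p` and `μ - s` on that of `1 - p`
  have e1 : p * (algebraMap ℝ Q μ - (s + p)) = U1 * p := by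
    rw [hU1, map_sub, map_one, mul_sub, mul_add, hp, (hl μ p).symm.eq, hsp.symm.eq]
    noncomm_ring
  have e0 : (1 - p) * (algebraMap ℝ Q μ - (s + p)) = U0 * (1 - p) := by
    rw [sub_mul, e1, hU1, hU0, map_sub, map_one]
    noncomm_ring
  have e1' : (algebraMap ℝ Q μ - (s + p)) * p = U1 * p := by
    rw [hU1, map_sub, map_one, sub_mul, add_mul, hp]
    noncomm_ring
  have e0' : (algebraMap ℝ Q μ - (s + p)) * (1 - p) = U0 * (1 - p) := by
    rw [mul_sub, e1', hU1, hU0, map_sub, map_one]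
    noncomm_ring
  have k0 : Commute ((U0⁻¹ : Qˣ) : Q) (1 - p) := (Commute.one_right _).sub_right c0'
  refine (spectrum.notMem_iff.2 ?_) hμ
  refine ⟨⟨_, (U1⁻¹ : Qˣ) * p + (U0⁻¹ : Qˣ) * (1 - p), ?_, ?_⟩, rfl⟩
  · rw [c1'.eq, k0.eq, mul_add, ← mul_assoc, ← mul_assoc, e1', e0', mul_assoc, mul_assoc, ← c1'.eq,
      ← k0.eq, Units.mul_inv_cancel_left, Units.mul_inv_cancel_left]
    abel
  · rw [add_mul, mul_assoc, mul_assoc, e1, e0, Units.inv_mul_cancel_left,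
      Units.inv_mul_cancel_left]
    abel

theorem int_spectrum_sum {ι : Type*} (S : Finset ι) (p : ι → Q) (hp : ∀ i ∈ S, p i * p i = p i)
    (hc : ∀ i ∈ S, ∀ j ∈ S, Commute (p i) (p j)) (N : ℤ) :
    spectrum ℝ (algebraMap ℝ Q N + ∑ i ∈ S, p i) ⊆ Set.range ((↑) : ℤ → ℝ) := by
  classical
  induction S using Finset.induction_on with
  | empty =>
    rw [Finset.sum_empty, add_zero]
    intro μ hμ
    by_contra h
    refine (spectrum.notMem_iff.2 ?_) hμ
    rw [← map_sub]
    exact (IsUnit.mk0 _ (sub_ne_zero.2 fun h' => h ⟨N, h'.symm⟩)).map _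
  | insert i S hi ih =>
    rw [Finset.sum_insert hi, add_comm (p i), ← add_assoc]
    refine int_spectrum_add ?_ (hp i (by simp)) (ih (fun j hj => hp j (by simp [hj]))
      fun j hj k hk => hc j (by simp [hj]) k (by simp [hk]))
    refine Commute.add_left (Algebra.commutes _ _) ?_
    exact Commute.sum_left _ _ _ fun j hj => hc j (by simp [hj]) i (by simp)

end Projections

section Core

variable {Q : Type*} [CStarAlgebra Q]

/-- `m` behaves like the discontinuous function `kap` of the unitary `w`: these are the relations
`κ φ = κ`, `κ η = θ` and `κ² = κ - θ` between `kap` and functions which are continuous on the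
circle. -/
structure Cut (m w : Q) : Prop where
  sa : IsSelfAdjoint m
  mul_bump : m * cfc (fun z : ℂ => (bump 1 z.re : ℂ)) w = m
  bump_mul : cfc (fun z : ℂ => (bump 1 z.re : ℂ)) w * m = m
  mul_eta : m * cfc eta w = cfc thet w
  eta_mul : cfc eta w * m = cfc thet w
  sq : m * m = m - cfc thet w

/-- A normal element whose spectrum avoids the end points of the segments indexed by `T`, together
with a cut along each of these segments. -/
structure Grid (x : Q) (T : Set (ℤ × ℤ)) (m : ℤ × ℤ → Q) : Prop where
  normal : IsStarNormal x
  avoids : ∀ l ∈ T, ∀ z ∈ spectrum ℂ x, Avoids l z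
  cut : ∀ l ∈ T, Cut (m l) (cfc (seg l) x)

namespace Grid

variable {x : Q} {T : Set (ℤ × ℤ)} {m : ℤ × ℤ → Q}

theorem cont (h : Grid x T m) {l : ℤ × ℤ} (hl : l ∈ T) : ContinuousOn (seg l) (spectrum ℂ x) :=
  continuousOn_seg (h.avoids l hl)

theorem mapsTo (h : Grid x T m) {l : ℤ × ℤ} (hl : l ∈ T) :
    Set.MapsTo (seg l) (spectrum ℂ x) (Metric.sphere 0 1) := fun z hz => by
  simpa using norm_seg (h.avoids l hl z hz)

theorem cont_comp (h : Grid x T m) {l : ℤ × ℤ} (hl : l ∈ T) {H : ℂ → ℂ}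
    (hH : ContinuousOn H (Metric.sphere 0 1)) :
    ContinuousOn (fun z => H (seg l z)) (spectrum ℂ x) :=
  hH.comp (h.cont hl) (h.mapsTo hl)

theorem cfc_seg (h : Grid x T m) {l : ℤ × ℤ} (hl : l ∈ T) {H : ℂ → ℂ}
    (hH : ContinuousOn H (Metric.sphere 0 1)) :
    cfc H (cfc (seg l) x) = cfc (fun z => H (seg l z)) x :=
  have := h.normal
  (cfc_comp' H (seg l) x (hH.mono (h.mapsTo hl).image_subset) (h.cont hl)).symm

theorem cont_bump (s : ℝ) (K : Set ℂ) : ContinuousOn (fun z : ℂ => (bump s z.re : ℂ)) K := by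
  have := continuous_bump s
  fun_prop

/-- A function of `x` may be replaced, next to `m l`, by a function of `cfc (seg l) x` with which it
agrees near the segment `l`. -/
theorem absorb (h : Grid x T m) {l : ℤ × ℤ} (hl : l ∈ T) {G H : ℂ → ℂ}
    (hG : ContinuousOn G (spectrum ℂ x)) (hH : ContinuousOn H (Metric.sphere 0 1))
    (hGH : ∀ z ∈ spectrum ℂ x, (seg l z).re < -1 / 4 → G z = H (seg l z)) :
    m l * cfc G x = m l * cfc H (cfc (seg l) x) ∧
      cfc G x * m l = cfc H (cfc (seg l) x) * m l := by
  have hb := h.cont_comp hl (cont_bump 1 _)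
  have hc := h.cut l hl
  have hHs := h.cont_comp hl hH
  have e0 := h.cfc_seg hl (cont_bump 1 _)
  have e : ∀ z ∈ spectrum ℂ x, (bump 1 (seg l z).re : ℂ) * G z =
      (bump 1 (seg l z).re : ℂ) * H (seg l z) := fun z hz => by
    by_cases h' : (seg l z).re < -1 / 4
    · rw [hGH z hz h']
    · rw [bump_eq_zero (by linarith)]; simp
  constructor
  · rw [← hc.mul_bump, mul_assoc, mul_assoc, e0, h.cfc_seg hl hH, ← cfc_mul _ _ _ hb hG,
      ← cfc_mul _ _ _ hb hHs, cfc_congr e]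
  · have e' : ∀ z ∈ spectrum ℂ x, G z * (bump 1 (seg l z).re : ℂ) =
      H (seg l z) * (bump 1 (seg l z).re : ℂ) := fun z hz => by
      rw [mul_comm, e z hz, mul_comm]
    rw [← hc.bump_mul, ← mul_assoc, ← mul_assoc, e0, h.cfc_seg hl hH, ← cfc_mul _ _ _ hG hb,
      ← cfc_mul _ _ _ hHs hb, cfc_congr e']

/-- The cut along `l` commutes with functions of `x` which are constant near the segment `l`. -/
theorem absorb_const (h : Grid x T m) {l : ℤ × ℤ} (hl : l ∈ T) {G : ℂ → ℂ} (c : ℂ)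
    (hG : ContinuousOn G (spectrum ℂ x))
    (hGc : ∀ z ∈ spectrum ℂ x, (seg l z).re < -1 / 4 → G z = c) : Commute (m l) (cfc G x) := by
  obtain ⟨h1, h2⟩ := h.absorb hl hG (H := fun _ => c) continuousOn_const hGc
  have hN : IsStarNormal (cfc (seg l) x) := cfc_predicate _ _
  rw [cfc_const c _ hN] at h1 h2
  rw [Commute, SemiconjBy, h1, h2, Algebra.commutes]

/-- Cuts along distinct segments are orthogonal, being supported in disjoint disks. -/
theorem orth (h : Grid x T m) {l l' : ℤ × ℤ} (hl : l ∈ T) (hl' : l' ∈ T) (hne : l ≠ l') :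
    m l * m l' = 0 := by
  rw [← (h.cut l hl).mul_bump, ← (h.cut l' hl').bump_mul, mul_assoc, ← mul_assoc (cfc _ _),
    h.cfc_seg hl (cont_bump 1 _), h.cfc_seg hl' (cont_bump 1 _),
    ← cfc_mul _ _ _ (h.cont_comp hl (cont_bump 1 _)) (h.cont_comp hl' (cont_bump 1 _))]
  have : cfc (fun z => (bump 1 (seg l z).re : ℂ) * (bump 1 (seg l' z).re : ℂ)) x = 0 := by
    rw [← cfc_zero ℂ x]
    refine cfc_congr fun z hz => ?_
    by_cases h1 : (seg l z).re < 0
    · have h2 : ¬ (seg l' z).re < 0 := fun h2 => hne (unique_of_neg h1 h2)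
      simp [bump_zero_of_not_neg zero_le_one h2]
    · simp [bump_zero_of_not_neg zero_le_one h1]
  rw [this, zero_mul, mul_zero]

theorem cont_thet_sum (h : Grid x T m) {ι : Type*} {e : ι → ℤ × ℤ}
    (S : Finset ι) (hS : ∀ i ∈ S, e i ∈ T) :
    ContinuousOn (fun z => ∑ i ∈ S, thet (seg (e i) z)) (spectrum ℂ x) :=
  continuousOn_finsetSum _ fun i hi => h.cont_comp (hS i hi) continuousOn_thet

theorem cfc_thet_sum (h : Grid x T m) {ι : Type*} {e : ι → ℤ × ℤ}
    (S : Finset ι) (hS : ∀ i ∈ S, e i ∈ T) :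
    cfc (fun z => ∑ i ∈ S, thet (seg (e i) z)) x = ∑ i ∈ S, cfc thet (cfc (seg (e i)) x) := by
  rw [Finset.sum_congr rfl fun i hi => h.cfc_seg (hS i hi) continuousOn_thet,
    ← cfc_sum _ _ _ fun i hi => h.cont_comp (hS i hi) continuousOn_thet]
  congr 1
  funext z
  simp

/-- By orthogonality the defect of idempotency of a sum of cuts is the sum of the defects. -/
theorem sum_sq (h : Grid x T m) {ι : Type*} {e : ι → ℤ × ℤ} (he : Function.Injective e)
    (S : Finset ι) (hS : ∀ i ∈ S, e i ∈ T) :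
    (∑ i ∈ S, m (e i)) * ∑ i ∈ S, m (e i) =
      ∑ i ∈ S, m (e i) - cfc (fun z => ∑ i ∈ S, thet (seg (e i) z)) x := by
  rw [h.cfc_thet_sum S hS, ← Finset.sum_sub_distrib, Finset.sum_mul]
  refine Finset.sum_congr rfl fun i hi => ?_
  rw [Finset.mul_sum, Finset.sum_eq_single_of_mem i hi fun j hj hne =>
    h.orth (hS i hi) (hS j hj) fun h' => hne (he h').symm, (h.cut _ (hS i hi)).sq]

end Grid

end Core

/-! ### Functions attached to vertical lines -/

section LineFunctions

/-- The indices `-N, …, N`. -/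
noncomputable def idx (N : ℕ) : Finset ℤ := Finset.Icc (-(N : ℤ)) N

/-- The indices of the unit segments covering the vertical grid lines in the square of radius `N`. -/
def segs (N : ℕ) : Set (ℤ × ℤ) := {l | l.1 ∈ idx N ∧ l.2 ∈ idx N}

theorem line_injective (j : ℤ) : Function.Injective fun k : ℤ => (j, k) :=
  fun _ _ h => (Prod.mk.inj h).2

/-- Cut-off along the `j`-th vertical line. -/
noncomputable def lineBump (N : ℕ) (j : ℤ) (z : ℂ) : ℝ := ∑ k ∈ idx N, bump 2 (seg (j, k) z).re

/-- The indicator of the half plane to the right of the `j`-th vertical line, made continuous by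
removing a neighbourhood of the line. -/
noncomputable def lineFun (N : ℕ) (j : ℤ) (z : ℂ) : ℂ :=
  if 0 < z.re - j then ((1 - lineBump N j z : ℝ) : ℂ) else 0

theorem lineBump_eq {N : ℕ} {j k : ℤ} {z : ℂ} (hk : k ∈ idx N) (h : (seg (j, k) z).re < 0) :
    lineBump N j z = bump 2 (seg (j, k) z).re :=
  sum_seg (line_injective j) (idx N) (F := fun k => bump 2 (seg (j, k) z).re)
    (fun _ _ h => bump_zero_of_not_neg (by norm_num) h) hk h

theorem lineBump_zero {N : ℕ} {j : ℤ} {z : ℂ} (h : ¬ ∃ k ∈ idx N, (seg (j, k) z).re < 0) :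
    lineBump N j z = 0 :=
  sum_seg_zero (e := fun k : ℤ => (j, k)) (idx N) (F := fun k => bump 2 (seg (j, k) z).re)
    (fun _ _ h => bump_zero_of_not_neg (by norm_num) h) h

theorem lineBump_zero_of_ne {N : ℕ} {i j k : ℤ} {z : ℂ} (hij : i ≠ j)
    (h : (seg (j, k) z).re < 0) : lineBump N i z = 0 :=
  lineBump_zero fun ⟨_, _, h'⟩ => hij (Prod.mk.inj (unique_of_neg h' h)).1

theorem lineBump_nonneg (N : ℕ) (j : ℤ) (z : ℂ) : 0 ≤ lineBump N j z :=
  Finset.sum_nonneg fun _ _ => bump_nonneg _ _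

theorem sum_lineBump_le (N : ℕ) (z : ℂ) : ∑ j ∈ idx N, lineBump N j z ≤ 1 := by
  simp only [lineBump]
  rw [← Finset.sum_product (idx N) (idx N) (fun l : ℤ × ℤ => bump 2 (seg l z).re)]
  have hF : ∀ l ∈ idx N ×ˢ idx N, ¬ (seg (id l) z).re < 0 → bump 2 (seg l z).re = 0 :=
    fun _ _ h => bump_zero_of_not_neg (by norm_num) h
  by_cases h : ∃ l ∈ idx N ×ˢ idx N, (seg (id l) z).re < 0
  · obtain ⟨l, hl, h'⟩ := h
    rw [sum_seg Function.injective_id _ hF hl h']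
    exact bump_le_one _ _
  · rw [sum_seg_zero _ hF h]
    exact zero_le_one

theorem norm_thet_le (w : ℂ) : ‖thet w‖ ≤ 1 := by
  unfold thet
  split_ifs
  · have h0 := bump_nonneg 2 w.re
    have h1 := bump_le_one 2 w.re
    rw [Complex.norm_real, Real.norm_eq_abs, abs_le]
    constructor <;> nlinarith
  · simp

theorem norm_thet_sum_le {ι : Type*} {e : ι → ℤ × ℤ} (he : Function.Injective e) (S : Finset ι)
    (z : ℂ) : ‖∑ i ∈ S, thet (seg (e i) z)‖ ≤ 1 := by
  have hF : ∀ i ∈ S, ¬ (seg (e i) z).re < 0 → thet (seg (e i) z) = 0 :=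
    fun _ _ h => thet_zero_of_not_neg h
  by_cases h : ∃ i ∈ S, (seg (e i) z).re < 0
  · obtain ⟨i, hi, h'⟩ := h
    rw [sum_seg he _ hF hi h']
    exact norm_thet_le _
  · rw [sum_seg_zero _ hF h]
    simp

/-- The defect of idempotency of `lineFun` is opposite to that of the cuts along the line. -/
theorem lineFun_sq {N : ℕ} {j : ℤ} {z : ℂ} (hav : ∀ k ∈ idx N, Avoids (j, k) z) :
    lineFun N j z * lineFun N j z + ∑ k ∈ idx N, thet (seg (j, k) z) = lineFun N j z := by
  have hF : ∀ k ∈ idx N, ¬ (seg (j, k) z).re < 0 → thet (seg (j, k) z) = 0 :=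
    fun _ _ h => thet_zero_of_not_neg h
  by_cases hre : 0 < z.re - j
  · simp only [lineFun, if_pos hre]
    by_cases h : ∃ k ∈ idx N, (seg (j, k) z).re < 0
    · obtain ⟨k, hk, h'⟩ := h
      have him : 0 < (seg (j, k) z).im := (seg_im_pos (hav k hk)).2 (by simpa using hre)
      rw [sum_seg (line_injective j) _ hF hk h', lineBump_eq hk h', thet, if_pos him]
      push_cast
      ring
    · rw [sum_seg_zero (e := fun k : ℤ => (j, k)) _ hF h, lineBump_zero h]
      simp
  · simp only [lineFun, if_neg hre]
    rw [Finset.sum_eq_zero fun k hk => ?_]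
    · simp
    have him : ¬ 0 < (seg (j, k) z).im := fun h => hre (by
      simpa using (seg_im_pos (hav k hk)).1 h)
    simp [thet, him]

/-- On the grid line the bump is `1`, so that `lineFun` does not jump there. -/
theorem lineBump_eq_one {N : ℕ} {j : ℤ} {z : ℂ} (hz : ‖z‖ < N)
    (hav : ∀ k ∈ idx N, Avoids (j, k) z) (hre : z.re = j) : lineBump N j z = 1 := by
  have him : |z.im| < N := (Complex.abs_im_le_norm z).trans_lt hz
  rw [abs_lt] at him
  have hk : ⌊z.im⌋ ∈ idx N := by
    rw [idx, Finset.mem_Icc]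
    refine ⟨Int.le_floor.2 (by push_cast; exact him.1.le), ?_⟩
    have : (⌊z.im⌋ : ℝ) ≤ N := (Int.floor_le _).trans him.2.le
    exact_mod_cast this
  have h := seg_re_eq (l := (j, ⌊z.im⌋)) (hav _ hk) hre rfl
  rw [lineBump_eq hk (by rw [h]; norm_num), h]
  exact bump_eq_one (by norm_num)

theorem lineFun_eq_eta {N : ℕ} {j k : ℤ} {z : ℂ} (hk : k ∈ idx N) (hav : Avoids (j, k) z)
    (h : (seg (j, k) z).re < -1 / 4) : lineFun N j z = eta (seg (j, k) z) := by
  have him := seg_im_pos hav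
  rw [lineFun, eta, lineBump_eq hk (by linarith), bump_eq_one (s := 0) (by linarith), one_mul]
  have : 0 < z.re - j ↔ 0 < (seg (j, k) z).im := by rw [him]; exact sub_pos
  simp only [this]

/-- Near the segments of another line `lineFun` is constant. -/
theorem lineFun_const {N : ℕ} {i j k : ℤ} {z : ℂ} (hij : i ≠ j) (h : (seg (j, k) z).re < 0) :
    lineFun N i z = if i < j then 1 else 0 := by
  obtain ⟨h1, -, -⟩ := disk_of_neg h
  rw [abs_lt] at h1
  rw [lineFun, lineBump_zero_of_ne hij h]
  rcases lt_or_gt_of_ne hij with h2 | h2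
  · have : (i : ℝ) + 1 ≤ j := by exact_mod_cast h2
    rw [if_pos (by simp only at h1; linarith), if_pos h2]
    simp
  · have : (j : ℝ) + 1 ≤ i := by exact_mod_cast h2
    rw [if_neg (by simp only at h1; linarith), if_neg (not_lt.2 h2.le)]

/-- The number of grid lines to the left of `z` is `⌈Re z⌉ + N`. At most one of them has a nonzero bump
at `z`, and the bump is at most `1`. -/
theorem sum_lineFun {N : ℕ} {z : ℂ} (hz : ‖z‖ < N) :
    ‖∑ j ∈ idx N, lineFun N j z - N - z.re‖ ≤ 2 := by
  have hre : |z.re| < N := (Complex.abs_re_le_norm z).trans_lt hz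
  rw [abs_lt] at hre
  have hcount : ∑ j ∈ idx N, (if 0 < z.re - j then (1 : ℝ) else 0) = ⌈z.re⌉ + N := by
    rw [Finset.sum_ite, Finset.sum_const_zero, add_zero, Finset.sum_const, nsmul_eq_mul, mul_one]
    have : (idx N).filter (fun j : ℤ => 0 < z.re - (j : ℝ)) = Finset.Ico (-(N : ℤ)) ⌈z.re⌉ := by
      ext j
      have hle : ⌈z.re⌉ ≤ N := Int.ceil_le.2 (by exact_mod_cast hre.2.le)
      rw [Finset.mem_filter, idx, Finset.mem_Icc, Finset.mem_Ico, Int.lt_ceil, sub_pos]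
      refine ⟨fun h => ⟨h.1.1, h.2⟩, fun h => ⟨⟨h.1, ?_⟩, h.2⟩⟩
      have : j < ⌈z.re⌉ := Int.lt_ceil.2 h.2
      omega
    have h2 : -(N : ℤ) ≤ ⌈z.re⌉ := by
      have : (-(N : ℤ) : ℝ) ≤ ⌈z.re⌉ := by
        push_cast
        exact hre.1.le.trans (Int.le_ceil _)
      exact_mod_cast this
    rw [this, Int.card_Ico]
    have : (((⌈z.re⌉ - -(N : ℤ)).toNat : ℤ) : ℝ) = ⌈z.re⌉ + N := by
      rw [Int.toNat_of_nonneg (by linarith)]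
      push_cast
      ring
    exact_mod_cast this
  have hsplit : ∑ j ∈ idx N, lineFun N j z = ((∑ j ∈ idx N, (if 0 < z.re - j then (1 : ℝ) else 0) -
      ∑ j ∈ idx N, (if 0 < z.re - j then lineBump N j z else 0) : ℝ) : ℂ) := by
    rw [← Finset.sum_sub_distrib, Complex.ofReal_sum]
    refine Finset.sum_congr rfl fun j _ => ?_
    unfold lineFun
    split_ifs <;> simp
  have h1 : 0 ≤ ∑ j ∈ idx N, (if 0 < z.re - j then lineBump N j z else 0) :=
    Finset.sum_nonneg fun j _ => by
      split_ifs
      · exact lineBump_nonneg _ _ _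
      · exact le_rfl
  have h2 : ∑ j ∈ idx N, (if 0 < z.re - j then lineBump N j z else 0) ≤ 1 := by
    refine le_trans (Finset.sum_le_sum fun j _ => ?_) (sum_lineBump_le N z)
    split_ifs
    · exact le_rfl
    · exact lineBump_nonneg _ _ _
  have h3 := Int.le_ceil z.re
  have h4 := Int.ceil_lt_add_one z.re
  rw [hsplit, hcount, ← Complex.ofReal_natCast, ← Complex.ofReal_sub, ← Complex.ofReal_sub,
    Complex.norm_real, Real.norm_eq_abs, abs_le]
  constructor <;> linarith

/-- The imaginary part, made constant near each of the segments. -/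
noncomputable def height (N : ℕ) (z : ℂ) : ℝ :=
  z.im - ∑ l ∈ idx N ×ˢ idx N, bump 0 (seg l z).re * (z.im - l.2)

theorem height_const {N : ℕ} {l : ℤ × ℤ} {z : ℂ} (hl : l ∈ segs N) (h : (seg l z).re < -1 / 4) :
    height N z = l.2 := by
  rw [height, sum_seg (z := z) (e := id) Function.injective_id _ (fun i _ h => by
    simp only [id] at h
    rw [bump_zero_of_not_neg le_rfl h, zero_mul]) (Finset.mem_product.2 hl) (by
      simp only [id]; linarith), bump_eq_one (by linarith)]
  ring

theorem height_near (N : ℕ) (z : ℂ) : |height N z - z.im| ≤ 1 := by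
  have hF : ∀ l ∈ idx N ×ˢ idx N, ¬ (seg (id l) z).re < 0 →
      bump 0 (seg l z).re * (z.im - l.2) = 0 := fun l _ h => by
    simp only [id] at h
    rw [bump_zero_of_not_neg le_rfl h, zero_mul]
  rw [height, sub_sub_cancel_left, abs_neg]
  by_cases h : ∃ l ∈ idx N ×ˢ idx N, (seg (id l) z).re < 0
  · obtain ⟨l, hl, h'⟩ := h
    obtain ⟨-, h2, h3⟩ := disk_of_neg h'
    simp only [id] at h2 h3
    rw [sum_seg Function.injective_id _ hF hl h', abs_mul]
    refine mul_le_one₀ ?_ (abs_nonneg _) ?_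
    · rw [abs_of_nonneg (bump_nonneg _ _)]
      exact bump_le_one _ _
    · rw [abs_of_pos h2]
      exact h3.le
  · rw [sum_seg_zero _ hF h]
    simp

end LineFunctions

/-! ### Approximation by commuting pairs with integer spectrum -/

section Core

variable {Q : Type*} [CStarAlgebra Q]

/-- The projection attached to the half plane to the right of the `j`-th vertical line. -/
noncomputable def proj (x : Q) (m : ℤ × ℤ → Q) (N : ℕ) (j : ℤ) : Q :=
  cfc (lineFun N j) x + ∑ k ∈ idx N, m (j, k)

namespace Grid

variable {x : Q} {N : ℕ} {m : ℤ × ℤ → Q}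

theorem cont_bump_seg (h : Grid x (segs N) m) (s : ℝ) {l : ℤ × ℤ} (hl : l ∈ segs N) :
    ContinuousOn (fun z => bump s (seg l z).re) (spectrum ℂ x) :=
  (continuous_bump s).comp_continuousOn
    (Complex.continuous_re.comp_continuousOn (h.cont hl))

theorem cont_lineFun (h : Grid x (segs N) m) (hN : ∀ z ∈ spectrum ℂ x, ‖z‖ < N) {j : ℤ}
    (hj : j ∈ idx N) : ContinuousOn (lineFun N j) (spectrum ℂ x) := by
  have hc : ContinuousOn (fun z => lineBump N j z) (spectrum ℂ x) :=
    continuousOn_finsetSum _ fun k hk => h.cont_bump_seg 2 (l := (j, k)) ⟨hj, hk⟩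
  refine continuousOn_cut (q := fun z => z.re - j) (by fun_prop)
    (Complex.continuous_ofReal.comp_continuousOn (continuousOn_const.sub hc)) fun z hz h0 => ?_
  rw [lineBump_eq_one (hN z hz) (fun k hk => h.avoids _ ⟨hj, hk⟩ z hz) (by linarith)]
  simp

theorem proj_sa (h : Grid x (segs N) m) {j : ℤ} (hj : j ∈ idx N) :
    IsSelfAdjoint (proj x m N j) := by
  refine IsSelfAdjoint.add ?_ (isSelfAdjoint_sum _ fun k hk => (h.cut _ ⟨hj, hk⟩).sa)
  rw [IsSelfAdjoint, ← cfc_star]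
  congr 1
  funext z
  rw [lineFun]
  split_ifs <;> simp

/-- The mixed products of `lineFun N j` and the cuts, which have the values of `κ η = θ`, make up for the
two defects of idempotency. -/
theorem proj_sq (h : Grid x (segs N) m) (hN : ∀ z ∈ spectrum ℂ x, ‖z‖ < N) {j : ℤ}
    (hj : j ∈ idx N) : proj x m N j * proj x m N j = proj x m N j := by
  have hT : ∀ k ∈ idx N, (j, k) ∈ segs N := fun k hk => ⟨hj, hk⟩
  have hG := h.cont_lineFun hN hj
  have hsum := h.sum_sq (line_injective j) (idx N) hT
  have hΘ := h.cfc_thet_sum (e := fun k : ℤ => (j, k)) (idx N) hT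
  have hΘc := h.cont_thet_sum (e := fun k : ℤ => (j, k)) (idx N) hT
  have hab : ∀ k ∈ idx N, m (j, k) * cfc (lineFun N j) x = cfc thet (cfc (seg (j, k)) x) ∧
      cfc (lineFun N j) x * m (j, k) = cfc thet (cfc (seg (j, k)) x) := fun k hk => by
    obtain ⟨h1, h2⟩ := h.absorb (hT k hk) hG continuousOn_eta fun z hz =>
      lineFun_eq_eta hk (h.avoids _ (hT k hk) z hz)
    exact ⟨h1.trans (h.cut _ (hT k hk)).mul_eta, h2.trans (h.cut _ (hT k hk)).eta_mul⟩
  have e1 : cfc (lineFun N j) x * ∑ k ∈ idx N, m (j, k) =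
      cfc (fun z => ∑ k ∈ idx N, thet (seg (j, k) z)) x := by
    rw [hΘ, Finset.mul_sum]
    exact Finset.sum_congr rfl fun k hk => (hab k hk).2
  have e2 : (∑ k ∈ idx N, m (j, k)) * cfc (lineFun N j) x =
      cfc (fun z => ∑ k ∈ idx N, thet (seg (j, k) z)) x := by
    rw [hΘ, Finset.sum_mul]
    exact Finset.sum_congr rfl fun k hk => (hab k hk).1
  have e3 : cfc (lineFun N j) x * cfc (lineFun N j) x +
      cfc (fun z => ∑ k ∈ idx N, thet (seg (j, k) z)) x = cfc (lineFun N j) x := by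
    have hGG : ContinuousOn (fun z => lineFun N j z * lineFun N j z) (spectrum ℂ x) := hG.mul hG
    rw [← cfc_mul _ _ _ hG hG, ← cfc_add _ _ _ hGG hΘc]
    exact cfc_congr fun z hz => lineFun_sq fun k hk => h.avoids _ (hT k hk) z hz
  rw [proj, mul_add, add_mul, add_mul, e1, e2, hsum]
  conv_rhs => rw [← e3]
  abel

theorem proj_comm (h : Grid x (segs N) m) (hN : ∀ z ∈ spectrum ℂ x, ‖z‖ < N) {i j : ℤ}
    (hi : i ∈ idx N) (hj : j ∈ idx N) : Commute (proj x m N i) (proj x m N j) := by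
  rcases eq_or_ne i j with rfl | hij
  · exact Commute.refl _
  have key : ∀ i ∈ idx N, ∀ j ∈ idx N, i ≠ j → ∀ k ∈ idx N,
      Commute (m (j, k)) (cfc (lineFun N i) x) := fun i hi j hj hij k hk =>
    h.absorb_const ⟨hj, hk⟩ _ (h.cont_lineFun hN hi) fun z _ hz =>
      lineFun_const hij (by linarith)
  refine Commute.add_left (Commute.add_right (cfc_commute_cfc _ _ _) ?_)
    (Commute.add_right ?_ ?_)
  · exact Commute.sum_right _ _ _ fun k hk => (key i hi j hj hij k hk).symm
  · exact Commute.sum_left _ _ _ fun k hk => key j hj i hi hij.symm k hk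
  · refine Commute.sum_left _ _ _ fun k hk => Commute.sum_right _ _ _ fun k' hk' => ?_
    rw [Commute, SemiconjBy, h.orth ⟨hi, hk⟩ ⟨hj, hk'⟩ fun e => hij (Prod.mk.inj e).1,
      h.orth ⟨hj, hk'⟩ ⟨hi, hk⟩ fun e => hij (Prod.mk.inj e).1.symm]

theorem cont_height (h : Grid x (segs N) m) :
    ContinuousOn (fun z => (height N z : ℂ)) (spectrum ℂ x) := by
  refine Complex.continuous_ofReal.comp_continuousOn ?_
  refine Complex.continuous_im.continuousOn.sub (continuousOn_finsetSum _ fun l hl => ?_)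
  exact (h.cont_bump_seg 0 (Finset.mem_product.1 hl)).mul
    (Complex.continuous_im.continuousOn.sub continuousOn_const)

/-- The sum `M` of all cuts satisfies `‖M‖² ≤ ‖M‖ + 1`. -/
theorem norm_sum_le (h : Grid x (segs N) m) : ‖∑ j ∈ idx N, ∑ k ∈ idx N, m (j, k)‖ ≤ 2 := by
  rw [← Finset.sum_product (idx N) (idx N) (fun l : ℤ × ℤ => m l)]
  have hT : ∀ l ∈ idx N ×ˢ idx N, id l ∈ segs N := fun l hl => Finset.mem_product.1 hl
  have hsq := h.sum_sq Function.injective_id _ hT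
  simp only [id] at hsq
  set M : Q := ∑ l ∈ idx N ×ˢ idx N, m l with hM
  have hsa : IsSelfAdjoint M := isSelfAdjoint_sum _ fun l hl => (h.cut _ (hT l hl)).sa
  have hΘ : ‖cfc (fun z => ∑ l ∈ idx N ×ˢ idx N, thet (seg l z)) x‖ ≤ 1 :=
    norm_cfc_le zero_le_one fun z _ => norm_thet_sum_le Function.injective_id _ z
  have e1 : ‖M‖ * ‖M‖ = ‖M * M‖ := by
    rw [← CStarRing.norm_star_mul_self (x := M), hsa.star_eq]
  have e2 := norm_sub_le M (cfc (fun z => ∑ l ∈ idx N ×ˢ idx N, thet (seg l z)) x)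
  rw [← hsq, ← e1] at e2
  nlinarith [norm_nonneg M]

/-- The sum of the projections of the vertical lines, shifted by `-N`, approximates the real part of
`x`, and the height function of `x` approximates its imaginary part. The latter commutes with the
projections because the height function is constant near each segment. -/
theorem approx (h : Grid x (segs N) m) (hN : ∀ z ∈ spectrum ℂ x, ‖z‖ < N) :
    ∃ a b : Q, IsSelfAdjoint a ∧ IsSelfAdjoint b ∧ Commute a b ∧
      spectrum ℝ a ⊆ Set.range ((↑) : ℤ → ℝ) ∧ ‖x - (a + Complex.I • b)‖ ≤ 5 := by
  have hn := h.normal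
  have hl : ∀ (r : ℝ) (z : Q), Commute (algebraMap ℝ Q r) z := Algebra.commutes
  have hre : ContinuousOn (fun z : ℂ => (z.re : ℂ)) (spectrum ℂ x) := by fun_prop
  have him : ContinuousOn (fun z : ℂ => (z.im : ℂ)) (spectrum ℂ x) := by fun_prop
  have hx : x = cfc (fun z : ℂ => (z.re : ℂ)) x + Complex.I • cfc (fun z : ℂ => (z.im : ℂ)) x := by
    rw [← cfc_smul _ _ _ him, ← cfc_add _ _ _ hre (by fun_prop)]
    conv_lhs => rw [← cfc_id' ℂ x]
    refine cfc_congr fun z _ => ?_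
    simp only [smul_eq_mul]
    rw [mul_comm, Complex.re_add_im]
  refine ⟨algebraMap ℝ Q ((-(N : ℤ) : ℤ) : ℝ) + ∑ j ∈ idx N, proj x m N j,
    cfc (fun z => (height N z : ℂ)) x, ?_, ?_, ?_, ?_, ?_⟩
  · exact (IsSelfAdjoint.algebraMap Q (IsSelfAdjoint.all _)).add
      (isSelfAdjoint_sum _ fun j hj => h.proj_sa hj)
  · rw [IsSelfAdjoint, ← cfc_star]
    simp
  · refine (hl _ _).add_left (Commute.sum_left _ _ _ fun j hj => ?_)
    refine (cfc_commute_cfc _ _ _).add_left (Commute.sum_left _ _ _ fun k hk => ?_)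
    exact h.absorb_const (l := (j, k)) ⟨hj, hk⟩ (k : ℂ) h.cont_height fun z _ hz => by
      rw [height_const (l := (j, k)) ⟨hj, hk⟩ hz]
      simp
  · exact int_spectrum_sum _ _ (fun j hj => h.proj_sq hN hj)
      (fun i hi j hj => h.proj_comm hN hi hj) _
  · have hG : ∀ j ∈ idx N, ContinuousOn (lineFun N j) (spectrum ℂ x) := fun j hj =>
      h.cont_lineFun hN hj
    have hGs : ContinuousOn (fun z => ∑ j ∈ idx N, lineFun N j z) (spectrum ℂ x) :=
      continuousOn_finsetSum _ hG
    have ea : algebraMap ℝ Q ((-(N : ℤ) : ℤ) : ℝ) + ∑ j ∈ idx N, proj x m N j -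
        cfc (fun z : ℂ => (z.re : ℂ)) x =
        cfc (fun z => ∑ j ∈ idx N, lineFun N j z - N - z.re) x +
          ∑ j ∈ idx N, ∑ k ∈ idx N, m (j, k) := by
      have hGN : ContinuousOn (fun z => ∑ j ∈ idx N, lineFun N j z - N) (spectrum ℂ x) :=
        hGs.sub continuousOn_const
      rw [cfc_sub _ _ _ hGN hre, cfc_sub _ (fun _ => (N : ℂ)) _ hGs continuousOn_const,
        cfc_const (N : ℂ) x]
      have e1 : cfc (fun z => ∑ j ∈ idx N, lineFun N j z) x = ∑ j ∈ idx N, cfc (lineFun N j) x := by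
        rw [← cfc_sum _ _ _ hG]
        congr 1
        funext z
        simp
      have e2 : algebraMap ℝ Q ((-(N : ℤ) : ℤ) : ℝ) = - algebraMap ℂ Q (N : ℂ) := by
        simp
      rw [e1, e2]
      simp only [proj, Finset.sum_add_distrib]
      abel
    have na : ‖algebraMap ℝ Q ((-(N : ℤ) : ℤ) : ℝ) + ∑ j ∈ idx N, proj x m N j -
        cfc (fun z : ℂ => (z.re : ℂ)) x‖ ≤ 4 := by
      rw [ea]
      have h1 : ‖cfc (fun z => ∑ j ∈ idx N, lineFun N j z - N - z.re) x‖ ≤ 2 :=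
        norm_cfc_le zero_le_two fun z hz => sum_lineFun (hN z hz)
      have h2 := h.norm_sum_le
      refine (norm_add_le _ _).trans ?_
      linarith
    have nb : ‖cfc (fun z => (height N z : ℂ)) x - cfc (fun z : ℂ => (z.im : ℂ)) x‖ ≤ 1 := by
      rw [← cfc_sub _ _ _ h.cont_height him]
      refine norm_cfc_le zero_le_one fun z _ => ?_
      rw [← Complex.ofReal_sub, Complex.norm_real, Real.norm_eq_abs]
      exact height_near N z
    generalize algebraMap ℝ Q ((-(N : ℤ) : ℤ) : ℝ) + ∑ j ∈ idx N, proj x m N j = a at *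
    generalize cfc (fun z => (height N z : ℂ)) x = b at *
    rw [norm_sub_rev]
    have e : a + Complex.I • b - x = (a - cfc (fun z : ℂ => (z.re : ℂ)) x) +
        Complex.I • (b - cfc (fun z : ℂ => (z.im : ℂ)) x) := by
      conv_lhs => rw [hx]
      rw [smul_sub]
      abel
    rw [e]
    refine (norm_add_le _ _).trans ?_
    rw [norm_smul, Complex.norm_I, one_mul]
    linarith

end Grid

/-- Every normal element is within an absolute constant of `a + ib` for commuting self-adjoint
`a` and `b` such that `a` has integer spectrum, as soon as polar decompositions and cuts of
unitaries exist. -/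
theorem exists_approx (hP : ∀ x : Q, ∃ u ∈ unitary Q, ∃ s : Q, IsSelfAdjoint s ∧ x = u * (s * s))
    (hB : ∀ w ∈ unitary Q, ∃ m, Cut m w) (x : Q) (hx : IsStarNormal x) :
    ∃ a b : Q, IsSelfAdjoint a ∧ IsSelfAdjoint b ∧ Commute a b ∧
      spectrum ℝ a ⊆ Set.range ((↑) : ℤ → ℝ) ∧ ‖x - (a + Complex.I • b)‖ ≤ 6 := by
  rcases subsingleton_or_nontrivial Q with hQ | hQ
  · refine ⟨0, 0, .zero _, .zero _, Commute.refl _, ?_, ?_⟩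
    · rw [spectrum.of_subsingleton]
      exact Set.empty_subset _
    · rw [Subsingleton.elim (x - _) 0, norm_zero]
      norm_num
  obtain ⟨N, hN⟩ := exists_nat_gt (‖x‖ + 1)
  -- the grid points which are end points of the segments in `segs N`
  set F : Finset ℂ := (Finset.Icc (-(N : ℤ)) N ×ˢ Finset.Icc (-(N : ℤ)) (N + 1)).image
    fun l => (l.1 : ℂ) + l.2 * Complex.I with hF
  obtain ⟨y, hy, hyx, hyF⟩ := punch hP x hx F one_pos
  have hyN : ∀ z ∈ spectrum ℂ y, ‖z‖ < N := fun z hz => by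
    have h1 := spectrum.norm_le_norm_of_mem hz
    have h2 : ‖y‖ ≤ ‖x‖ + ‖y - x‖ := norm_le_norm_add_norm_sub' _ _
    linarith
  have hav : ∀ l ∈ segs N, ∀ z ∈ spectrum ℂ y, Avoids l z := fun l hl z hz => by
    obtain ⟨h1, h2⟩ := hl
    simp only [idx, Finset.mem_Icc] at h1 h2
    constructor
    · rintro rfl
      refine hyF _ (Finset.mem_image.2 ⟨l, ?_, rfl⟩) hz
      simp only [Finset.mem_product, Finset.mem_Icc]
      omega
    · rintro rfl
      refine hyF _ (Finset.mem_image.2 ⟨(l.1, l.2 + 1), ?_, rfl⟩) hz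
      simp only [Finset.mem_product, Finset.mem_Icc]
      omega
  have hcut : ∀ l, ∃ m : Q, l ∈ segs N → Cut m (cfc (seg l) y) := fun l => by
    by_cases hl : l ∈ segs N
    · have hc := continuousOn_seg (hav l hl)
      obtain ⟨m, hm⟩ := hB (cfc (seg l) y) ((cfc_unitary_iff _ _ hy hc).2 fun z hz => by
        have := norm_seg (hav l hl z hz)
        rw [RCLike.star_def, ← Complex.normSq_eq_conj_mul_self, Complex.normSq_eq_norm_sq, this]
        simp)
      exact ⟨m, fun _ => hm⟩
    · exact ⟨0, fun h => absurd h hl⟩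
  choose m hm using hcut
  obtain ⟨a, b, ha, hb, hab, hint, hle⟩ := Grid.approx (m := m) ⟨hy, hav, hm⟩ hyN
  refine ⟨a, b, ha, hb, hab, hint, ?_⟩
  have h1 := norm_sub_le_norm_sub_add_norm_sub x y (a + Complex.I • b)
  rw [norm_sub_rev x y] at h1
  linarith

end Core

/-! ### Almost normal sequences -/

section Unital

variable {A : ℕ → Type u} [∀ n, CStarAlgebra (A n)] [∀ n, Nontrivial (A n)]
  [∀ n, FiniteDimensional ℂ (A n)]
variable {Q : Type u} [CStarAlgebra Q] {π : lp A ∞ →⋆ₐ[ℂ] Q}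

/-- The properties of a cut are instances of the relations in `exists_borel`. -/
theorem exists_cut (hs : Function.Surjective π) (hc : Continuous π)
    (h0 : ∀ a : lp A ∞, Tendsto (fun n => ‖a n‖) atTop (𝓝 0) → π a = 0) {w : Q}
    (hw : w ∈ unitary Q) : ∃ m, Cut m w := by
  obtain ⟨m, hm, h1, h2, h3⟩ := exists_borel hs hc h0 hw kap 1 norm_kap_le star_kap
  have e := h1 eta thet continuousOn_eta continuousOn_thet fun z _ => eta_mul_kap z
  have p := h3 (fun z : ℂ => (bump 1 z.re : ℂ)) (Grid.cont_bump 1 _) fun z _ => kap_mul_bump z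
  exact ⟨m, hm, p.1, p.2, e.1, e.2, h2 thet continuousOn_thet fun z _ => kap_mul_kap z⟩

/-- Lin's theorem for sequences in unital finite-dimensional C⋆-algebras. -/
theorem exists_normal_near_unital (V : lp A ∞)
    (hV : Tendsto (fun n => ‖V n * star (V n) - star (V n) * V n‖) atTop (𝓝 0))
    {ε : ℝ} (hε : 0 < ε) :
    ∀ᶠ n in atTop, ∃ y : A n, IsStarNormal y ∧ ‖y - V n‖ < ε := by
  obtain ⟨Q, _, π, hs, hc, h0, h1⟩ := exists_quotient A
  have hn : IsStarNormal (π V) := by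
    refine ⟨?_⟩
    have h := map_congr (π := π) (a := V * star V) (b := star V * V) h0 hV
    rw [map_mul, map_mul, map_star] at h
    exact h.symm
  -- the absolute error `6` for `L • V` is an error `6 / L` for `V`
  obtain ⟨L, hL⟩ := exists_nat_gt (6 / ε)
  have hL0 : (0 : ℝ) < L := (by positivity : (0 : ℝ) < 6 / ε).trans hL
  have hLc : (L : ℂ) ≠ 0 := by exact_mod_cast hL0.ne'
  have hn' : IsStarNormal ((L : ℂ) • π V) := by
    refine ⟨?_⟩
    rw [star_smul]
    exact ((hn.star_comm_self).smul_left _).smul_right _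
  obtain ⟨a, b, ha, hb, hab, hint, hle⟩ := exists_approx (fun x => polar_quot hs h0 x)
    (fun w hw => exists_cut hs hc h0 hw) ((L : ℂ) • π V) hn'
  obtain ⟨Y, hY, hYe⟩ := exists_normal_lift hs hc h0 h1 ha hb hab hint
  have hlt : ‖π ((L : ℂ)⁻¹ • Y - V)‖ < ε := by
    have e : π ((L : ℂ)⁻¹ • Y - V) = -((L : ℂ)⁻¹ • ((L : ℂ) • π V - (a + Complex.I • b))) := by
      rw [smul_sub, inv_smul_smul₀ hLc, map_sub, map_smul, hYe, neg_sub]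
    rw [e, norm_neg, norm_smul, norm_inv, Complex.norm_natCast]
    rw [div_lt_iff₀ hε] at hL
    rw [inv_mul_lt_iff₀ hL0]
    exact hle.trans_lt hL
  filter_upwards [h1 _ _ hlt] with n hn
  refine ⟨(L : ℂ)⁻¹ • Y n, ⟨?_⟩, hn⟩
  rw [star_smul]
  exact (((hY n).star_comm_self).smul_left _).smul_right _

end Unital

section NonUnital

instance finiteDimensional_unitization (E : Type*) [NonUnitalCStarAlgebra E]
    [FiniteDimensional ℂ E] : FiniteDimensional ℂ (Unitization ℂ E) :=
  Module.Finite.equiv (Unitization.linearEquiv ℂ ℂ E).symm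

theorem norm_fst_le {E : Type*} [NonUnitalCStarAlgebra E] (x : Unitization ℂ E) :
    ‖x.fst‖ ≤ ‖x‖ := by
  rw [Unitization.norm_eq_sup]
  exact le_max_left _ _

/-- A normal element of the unitization which is near `v` has a normal `E`-part near `v`: its scalar
part is small. -/
theorem exists_normal_of_unitization {E : Type*} [NonUnitalCStarAlgebra E] {v : E}
    {y : Unitization ℂ E} (hy : IsStarNormal y) {ε : ℝ} (h : ‖y - (v : Unitization ℂ E)‖ < ε) :
    IsStarNormal y.snd ∧ ‖y.snd - v‖ < 2 * ε := by
  constructor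
  · refine ⟨?_⟩
    have h1 := congrArg (fun z => z.snd) hy.star_comm_self.eq
    simp only [Unitization.snd_mul, Unitization.fst_star, Unitization.snd_star] at h1
    -- the mixed terms of `star y * y` and `y * star y` agree
    have h2 : star y.fst • y.snd + y.fst • star y.snd = y.fst • star y.snd + star y.fst • y.snd :=
      add_comm _ _
    rw [h2] at h1
    exact add_left_cancel h1
  · have h1 := norm_fst_le (y - (v : Unitization ℂ E))
    rw [sub_eq_add_neg, Unitization.fst_add, Unitization.fst_neg, Unitization.fst_inr, neg_zero,
      add_zero, ← sub_eq_add_neg] at h1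
    have h2 : ((y.snd - v : E) : Unitization ℂ E) =
        (y - (v : Unitization ℂ E)) - algebraMap ℂ _ y.fst := by
      ext <;> simp [Unitization.algebraMap_eq_inl, sub_eq_add_neg]
    have h3 : ‖((y.snd - v : E) : Unitization ℂ E)‖ = ‖y.snd - v‖ := Unitization.norm_inr _
    rw [← h3, h2]
    refine (norm_sub_le _ _).trans_lt ?_
    rw [norm_algebraMap']
    linarith

/-- Truncating the norm of a normal element costs no more than its distance to the unit ball. -/
theorem exists_contraction {E : Type*} [NonUnitalCStarAlgebra E] {v b : E} (hv : ‖v‖ ≤ 1)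
    (hb : IsStarNormal b) : ∃ c : E, IsStarNormal c ∧ ‖c‖ ≤ 1 ∧ ‖c - v‖ ≤ 2 * ‖b - v‖ := by
  rcases le_total ‖b‖ 1 with h | h
  · exact ⟨b, hb, h, by linarith [norm_nonneg (b - v)]⟩
  have h0 : 0 < ‖b‖ := zero_lt_one.trans_le h
  refine ⟨(‖b‖⁻¹ : ℝ) • b, ⟨?_⟩, ?_, ?_⟩
  · rw [star_smul]
    exact (hb.star_comm_self.smul_left _).smul_right _
  · rw [norm_smul, norm_inv, norm_norm, inv_mul_cancel₀ h0.ne']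
  · have h1 : ‖(‖b‖⁻¹ : ℝ) • b - b‖ = ‖b‖ - 1 := by
      have : (‖b‖⁻¹ : ℝ) • b - b = (‖b‖⁻¹ - 1 : ℝ) • b := by rw [sub_smul, one_smul]
      rw [this, norm_smul, Real.norm_of_nonpos (sub_nonpos.2 (inv_le_one_of_one_le₀ h))]
      field_simp
      ring
    have h2 : ‖b‖ ≤ ‖b - v‖ + ‖v‖ := norm_le_norm_sub_add b v
    have h3 := norm_sub_le_norm_sub_add_norm_sub ((‖b‖⁻¹ : ℝ) • b) b v
    linarith

/-- Lin's theorem for sequences in finite-dimensional C⋆-algebras. -/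
theorem exists_normal_near (B : ℕ → Type u) [∀ n, NonUnitalCStarAlgebra (B n)]
    [∀ n, FiniteDimensional ℂ (B n)] (v : ∀ n, B n) (hv : ∀ n, ‖v n‖ ≤ 1)
    (h : Tendsto (fun n => ‖v n * star (v n) - star (v n) * v n‖) atTop (𝓝 0))
    {ε : ℝ} (hε : 0 < ε) :
    ∀ᶠ n in atTop, ∃ b : B n, IsStarNormal b ∧ ‖b - v n‖ < ε := by
  have key := exists_normal_near_unital (A := fun n => Unitization ℂ (B n))
    (mkLp (fun n => (v n : Unitization ℂ (B n))) 1 fun n => by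
      rw [Unitization.norm_inr]; exact hv n) (by
      simp only [mkLp_apply, ← Unitization.inr_star, ← Unitization.inr_mul ℂ,
        ← Unitization.inr_sub ℂ]
      simpa only [Unitization.norm_inr] using h) (half_pos hε)
  filter_upwards [key] with n hn
  obtain ⟨y, hy, hyv⟩ := hn
  obtain ⟨h1, h2⟩ := exists_normal_of_unitization hy hyv
  exact ⟨y.snd, h1, by linarith⟩

end NonUnital

end LinThm


open Filter

/-- **Almost normal sequences in products of finite-dimensional C⋆-algebras are close to
normal sequences.** -/
theorem exists_normal_contractive_lift_of_asymptotically_normal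
    (B : ℕ → Type*) [∀ n, NonUnitalCStarAlgebra (B n)] [∀ n, FiniteDimensional ℂ (B n)]
    (v : ∀ n, B n) (hv_contr : ∀ n, ‖v n‖ ≤ 1)
    (hv_normal : Tendsto (fun n => ‖v n * star (v n) - star (v n) * v n‖) atTop (nhds 0)) :
    ∃ vBar : ∀ n, B n,
      (∀ n, vBar n * star (vBar n) = star (vBar n) * vBar n) ∧
      (∀ n, ‖vBar n‖ ≤ 1) ∧
      Tendsto (fun n => ‖vBar n - v n‖) atTop (nhds 0) := by
  have hne : ∀ n, {b : B n | IsStarNormal b}.Nonempty := fun n => ⟨0, ⟨Commute.zero_right _⟩⟩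
  -- a normal element of `B n` whose distance to `v n` is minimal up to `1 / (n + 1)`
  have hb : ∀ n, ∃ b : B n, IsStarNormal b ∧
      dist (v n) b < Metric.infDist (v n) {b : B n | IsStarNormal b} + 1 / ((n : ℝ) + 1) :=
    fun n => (Metric.infDist_lt_iff (hne n)).1 (lt_add_of_pos_right _ (by positivity))
  choose b hbn hbd using hb
  have hinf : Tendsto (fun n => Metric.infDist (v n) {b : B n | IsStarNormal b}) atTop
      (nhds 0) := by
    refine Metric.tendsto_nhds.2 fun ε hε => ?_
    filter_upwards [LinThm.exists_normal_near B v hv_contr hv_normal hε] with n ⟨y, hy, hyv⟩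
    rw [Real.dist_0_eq_abs, abs_of_nonneg Metric.infDist_nonneg]
    refine (Metric.infDist_le_dist_of_mem (show y ∈ {b : B n | IsStarNormal b} from hy)).trans_lt ?_
    rwa [dist_eq_norm, norm_sub_rev]
  choose c hcn hc1 hcd using fun n => LinThm.exists_contraction (hv_contr n) (hbn n)
  refine ⟨c, fun n => (hcn n).star_comm_self.eq.symm, hc1, ?_⟩
  have hlim := (hinf.add tendsto_one_div_add_atTop_nhds_zero_nat).const_mul 2
  rw [add_zero, mul_zero] at hlim
  refine squeeze_zero (fun n => norm_nonneg _) (fun n => ?_) hlim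
  refine (hcd n).trans (mul_le_mul_of_nonneg_left ?_ zero_le_two)
  rw [norm_sub_rev, ← dist_eq_norm]
  exact (hbd n).le
end

section
/- Let A be a unital C*-algebra, J ⊆ A a closed two-sided ideal, π : A → A/J the quotient *-homomorphism, and μ : A/J → A a completely positive contractive map with π ∘ μ = id_{A/J}. Let (h_n)_{n∈ℕ} ⊆ J be positive contractions satisfying h_{n+1}h_n = h_n for all n, ‖h_n j − j‖ → 0 for every j ∈ J, and ‖h_n x − x h_n‖ → 0 for every x ∈ A. Then for every x ∈ A: ‖ x − h_n^{1/2} x h_n^{1/2} − (h_{n+1} − h_n)^{1/2} μ(π(x)) (h_{n+1} − h_n)^{1/2} − (1 − h_{n+1})^{1/2} μ(π(x)) (1 − h_{n+1})^{1/2} ‖ → 0 as n → ∞. -/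
/-!
Write `y = μ (π x)`, so that `x - y ∈ J`, and `d = h (n + 1) - h n`, `e = 1 - h (n + 1)`. The
relation `h (n + 1) * h n = h n` gives `h n = h (n + 1) * h n * h (n + 1) ≤ h (n + 1) ^ 2
≤ h (n + 1)`, so `h n`, `d`, `e` are positive contractions adding up to `1`.

The square root of an asymptotically central sequence of positive contractions is asymptotically
central: this is immediate for polynomials, and the square root is a uniform limit of polynomials
on `[0, 1]` (`tendsto_commutator_sqrt`). Hence `√c * z * √c` may be replaced by `c * z` for each of
the three compressions (`tendsto_sqrt_compression`). What remains is
`x - h n * x - d * y - e * y = (x - y) - h n * (x - y)`, which tends to `0` because `h` is an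
approximate unit for `J`.
-/

/-!
Let `A` be a unital C⋆-algebra, `J ⊆ A` a closed two-sided ideal, `π : A → A/J` the quotient
map (represented by a surjective `⋆`-homomorphism onto a C⋆-algebra `Q` with kernel `J`), and
`μ : A/J → A` a completely positive contractive lift of the identity.  If `(h_n) ⊆ J` is a
quasicentral idempotent approximate unit of positive contractions for `J`, then for every
`x ∈ A`:
`‖x − h_n^{1/2} x h_n^{1/2} − (h_{n+1} − h_n)^{1/2} μ(π x) (h_{n+1} − h_n)^{1/2}
   − (1 − h_{n+1})^{1/2} μ(π x) (1 − h_{n+1})^{1/2}‖ → 0`.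
-/

open Filter

noncomputable section

/-- An element of a C⋆-algebra (or of a matrix algebra over one, with `star` the conjugate
transpose) is positive if and only if it is of the form `star x * x`. -/
def IsPositiveElement {A : Type*} [Mul A] [Star A] (a : A) : Prop :=
  ∃ x, a = star x * x

/-- A linear map between C⋆-algebras is completely positive if all of its amplifications to
matrix algebras map positive matrices to positive matrices. -/
def IsCompletelyPositive {A B : Type*} [NonUnitalCStarAlgebra A] [NonUnitalCStarAlgebra B]
    (φ : A →ₗ[ℂ] B) : Prop :=
  ∀ (m : ℕ) (M : Matrix (Fin m) (Fin m) A),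
    IsPositiveElement M → IsPositiveElement (M.map φ)

/-- A map between C⋆-algebras is contractive if `‖φ a‖ ≤ ‖a‖` for all `a`, i.e. `‖φ‖ ≤ 1`. -/
def IsContraction {A B : Type*} [NonUnitalCStarAlgebra A] [NonUnitalCStarAlgebra B]
    (φ : A →ₗ[ℂ] B) : Prop :=
  ∀ a, ‖φ a‖ ≤ ‖a‖

/-- A map between C⋆-algebras is order zero if it sends pairs of orthogonal positive elements to
pairs of orthogonal elements. -/
def IsOrderZero {A B : Type*} [NonUnitalCStarAlgebra A] [NonUnitalCStarAlgebra B]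
    (φ : A →ₗ[ℂ] B) : Prop :=
  ∀ a b : A, IsPositiveElement a → IsPositiveElement b → a * b = 0 → φ a * φ b = 0

/-- Asymptotic commutation of contractions with `x` passes to polynomials in them. -/
theorem tendsto_commutator_aeval {A : Type*} [CStarAlgebra A] (a : ℕ → A) (x : A)
    (ha : ∀ n, ‖a n‖ ≤ 1) (hc : Tendsto (fun n => a n * x - x * a n) atTop (nhds 0))
    (p : Polynomial ℝ) :
    Tendsto (fun n => Polynomial.aeval (a n) p * x - x * Polynomial.aeval (a n) p)
      atTop (nhds 0) := by
  -- The induction on `p` carries along a bound on `p (a n)`, needed for the Leibniz rule.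
  suffices H : (∃ C : ℝ, ∀ n, ‖Polynomial.aeval (a n) p‖ ≤ C) ∧
      Tendsto (fun n => Polynomial.aeval (a n) p * x - x * Polynomial.aeval (a n) p)
        atTop (nhds 0) from H.2
  induction p using Polynomial.induction_on with
  | C r =>
    refine ⟨⟨‖algebraMap ℝ A r‖, fun n => by simp⟩, ?_⟩
    simp [Algebra.commutes r x]
  | add p q hp hq =>
    obtain ⟨⟨C, hC⟩, hp⟩ := hp
    obtain ⟨⟨D, hD⟩, hq⟩ := hq
    refine ⟨⟨C + D, fun n => ?_⟩, ?_⟩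
    · rw [map_add]
      exact (norm_add_le _ _).trans (add_le_add (hC n) (hD n))
    · have := hp.add hq
      rw [add_zero] at this
      refine this.congr fun n => ?_
      rw [map_add]
      noncomm_ring
  | monomial m r hm =>
    rw [pow_succ, ← mul_assoc]
    obtain ⟨⟨C, hC⟩, hm⟩ := hm
    refine ⟨⟨C, fun n => ?_⟩, ?_⟩
    · rw [map_mul, Polynomial.aeval_X]
      exact (norm_mul_le _ _).trans
        ((mul_le_of_le_one_right (norm_nonneg _) (ha n)).trans (hC n))
    · have h1 := isBoundedUnder_le_mul_tendsto_zero (isBoundedUnder_of ⟨C, hC⟩) hc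
      have h2 := hm.zero_mul_isBoundedUnder_le (isBoundedUnder_of ⟨1, ha⟩)
      have := h1.add h2
      rw [add_zero] at this
      refine this.congr fun n => ?_
      rw [map_mul _ (_ * _) Polynomial.X, Polynomial.aeval_X]
      noncomm_ring

/-- Asymptotic commutation of positive contractions with `x` passes to their square roots. -/
theorem tendsto_commutator_sqrt {A : Type*} [CStarAlgebra A] [PartialOrder A] [StarOrderedRing A]
    (a : ℕ → A) (x : A) (h0 : ∀ n, 0 ≤ a n) (ha : ∀ n, ‖a n‖ ≤ 1)
    (hc : Tendsto (fun n => a n * x - x * a n) atTop (nhds 0)) :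
    Tendsto (fun n => CFC.sqrt (a n) * x - x * CFC.sqrt (a n)) atTop (nhds 0) := by
  rw [Metric.tendsto_atTop]
  intro ε hε
  set δ : ℝ := ε / (4 * (‖x‖ + 1)) with hδ
  have hδ0 : 0 < δ := by positivity
  obtain ⟨p, hp⟩ := exists_polynomial_near_of_continuousOn 0 1 Real.sqrt
    Real.continuous_sqrt.continuousOn δ hδ0
  have happrox : ∀ n, ‖CFC.sqrt (a n) - Polynomial.aeval (a n) p‖ ≤ δ := by
    intro n
    have hsa : IsSelfAdjoint (a n) := .of_nonneg (h0 n)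
    rw [CFC.sqrt_eq_real_sqrt (a n) (h0 n), cfcₙ_eq_cfc, ← cfc_polynomial p (a n),
      ← cfc_sub _ _ _ (by fun_prop) (by fun_prop)]
    refine norm_cfc_le hδ0.le fun t ht => ?_
    have ht0 : 0 ≤ t := spectrum_nonneg_of_nonneg (h0 n) ht
    have ht1 : t ≤ 1 := by
      have hle : a n ≤ algebraMap ℝ A 1 := by
        rw [map_one]
        exact (CStarAlgebra.norm_le_one_iff_of_nonneg (a n) (h0 n)).1 (ha n)
      exact (le_algebraMap_iff_spectrum_le hsa).1 hle t ht
    rw [Real.norm_eq_abs, abs_sub_comm]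
    exact (hp t ⟨ht0, ht1⟩).le
  obtain ⟨N, hN⟩ := Metric.tendsto_atTop.1 (tendsto_commutator_aeval a x ha hc p) (ε / 2)
    (by positivity)
  refine ⟨N, fun n hn => ?_⟩
  have h1 := hN n hn
  have h2 := happrox n
  rw [dist_zero_right] at h1 ⊢
  set s := CFC.sqrt (a n)
  set q := Polynomial.aeval (a n) p
  have h3 : s * x - x * s = (s - q) * x - x * (s - q) + (q * x - x * q) := by noncomm_ring
  have h4 : ‖(s - q) * x‖ ≤ δ * ‖x‖ := (norm_mul_le _ _).trans (by gcongr)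
  have h5 : ‖x * (s - q)‖ ≤ δ * ‖x‖ := (norm_mul_le _ _).trans (by rw [mul_comm]; gcongr)
  have h6 : δ * ‖x‖ ≤ ε / 4 := by
    have : δ * (‖x‖ + 1) = ε / 4 := by rw [hδ]; field_simp
    nlinarith
  rw [h3]
  have h7 := norm_add_le ((s - q) * x - x * (s - q)) (q * x - x * q)
  have h8 := norm_sub_le ((s - q) * x) (x * (s - q))
  linarith

/-- Compression by `√(a n)` is asymptotically left multiplication by `a n`. -/
theorem tendsto_sqrt_compression {A : Type*} [CStarAlgebra A] [PartialOrder A]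
    [StarOrderedRing A] (a : ℕ → A) (x : A) (h0 : ∀ n, 0 ≤ a n) (ha : ∀ n, ‖a n‖ ≤ 1)
    (hc : Tendsto (fun n => a n * x - x * a n) atTop (nhds 0)) :
    Tendsto (fun n => a n * x - CFC.sqrt (a n) * x * CFC.sqrt (a n)) atTop (nhds 0) := by
  have hb : ∀ n, ‖CFC.sqrt (a n)‖ ≤ 1 := fun n => by
    rw [CFC.norm_sqrt (a n) (h0 n)]
    exact Real.sqrt_le_one.2 (ha n)
  refine (isBoundedUnder_le_mul_tendsto_zero (isBoundedUnder_of ⟨1, hb⟩)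
    (tendsto_commutator_sqrt a x h0 ha hc)).congr fun n => ?_
  nth_rw 4 [← CFC.sqrt_mul_sqrt_self (a n) (h0 n)]
  noncomm_ring

/-- If `b` is a positive contraction acting as a unit on `a ≥ 0`, `‖a‖ ≤ 1`, then `a ≤ b`. -/
theorem le_of_mul_eq_self {A : Type*} [CStarAlgebra A] [PartialOrder A] [StarOrderedRing A]
    {a b : A} (ha0 : 0 ≤ a) (ha : ‖a‖ ≤ 1) (hb0 : 0 ≤ b) (hb : ‖b‖ ≤ 1) (hab : b * a = a) :
    a ≤ b := by
  have hsa : IsSelfAdjoint a := .of_nonneg ha0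
  have hsb : IsSelfAdjoint b := .of_nonneg hb0
  have hba : a * b = a := by
    have := congrArg star hab
    rwa [star_mul, hsa.star_eq, hsb.star_eq] at this
  have ha1 : a ≤ 1 := (CStarAlgebra.norm_le_one_iff_of_nonneg a ha0).1 ha
  have hb1 : b ≤ 1 := (CStarAlgebra.norm_le_one_iff_of_nonneg b hb0).1 hb
  calc a = b * a * b := by rw [hab, hba]
    _ ≤ b * 1 * b := hsb.conjugate_le_conjugate ha1
    _ = b ^ 2 := by rw [mul_one, sq]
    _ ≤ b ^ 1 := CStarAlgebra.pow_antitone hb0 hb1 (by norm_num)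
    _ = b := pow_one b

/-- **Decomposition of an extension element along a quasicentral idempotent approximate
unit.** -/
theorem tendsto_decomposition_along_quasicentral_approximate_unit
    (A : Type*) [CStarAlgebra A] [PartialOrder A] [StarOrderedRing A]
    (Q : Type*) [CStarAlgebra Q]
    (J : TwoSidedIdeal A) (hJ_closed : IsClosed (J : Set A))
    (π : A →⋆ₐ[ℂ] Q) (hπ_surj : Function.Surjective π)
    (hπ_ker : ∀ x : A, π x = 0 ↔ x ∈ J)
    (μ : Q →ₗ[ℂ] A)
    (hμcp : IsCompletelyPositive μ) (hμcontr : IsContraction μ)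
    (hμ_lift : ∀ y : Q, π (μ y) = y)
    (h : ℕ → A)
    (h_mem : ∀ n, h n ∈ J)
    (h_pos : ∀ n, 0 ≤ h n)
    (h_contr : ∀ n, ‖h n‖ ≤ 1)
    (h_idem : ∀ n, h (n + 1) * h n = h n)
    (h_approx : ∀ j ∈ J, Tendsto (fun n => ‖h n * j - j‖) atTop (nhds 0))
    (h_quasicentral : ∀ x : A, Tendsto (fun n => ‖h n * x - x * h n‖) atTop (nhds 0)) :
    ∀ x : A,
      Tendsto (fun n =>
          ‖x - CFC.sqrt (h n) * x * CFC.sqrt (h n)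
            - CFC.sqrt (h (n + 1) - h n) * μ (π x) * CFC.sqrt (h (n + 1) - h n)
            - CFC.sqrt (1 - h (n + 1)) * μ (π x) * CFC.sqrt (1 - h (n + 1))‖)
        atTop (nhds 0) := by
  intro x
  set y := μ (π x) with hy
  have hle1 : ∀ n, h n ≤ 1 := fun n =>
    (CStarAlgebra.norm_le_one_iff_of_nonneg (h n) (h_pos n)).1 (h_contr n)
  have hmono : ∀ n, h n ≤ h (n + 1) := fun n =>
    le_of_mul_eq_self (h_pos n) (h_contr n) (h_pos _) (h_contr _) (h_idem n)
  have hd0 : ∀ n, 0 ≤ h (n + 1) - h n := fun n => sub_nonneg.2 (hmono n)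
  have hd1 : ∀ n, ‖h (n + 1) - h n‖ ≤ 1 := fun n =>
    (CStarAlgebra.norm_le_one_iff_of_nonneg _ (hd0 n)).2
      ((sub_le_self _ (h_pos n)).trans (hle1 _))
  have he0 : ∀ n, 0 ≤ 1 - h (n + 1) := fun n => sub_nonneg.2 (hle1 _)
  have he1 : ∀ n, ‖1 - h (n + 1)‖ ≤ 1 := fun n =>
    (CStarAlgebra.norm_le_one_iff_of_nonneg _ (he0 n)).2 (sub_le_self _ (h_pos _))
  have hc : ∀ z, Tendsto (fun n => h n * z - z * h n) atTop (nhds 0) := fun z =>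
    tendsto_zero_iff_norm_tendsto_zero.2 (h_quasicentral z)
  have hc' : ∀ z, Tendsto (fun n => h (n + 1) * z - z * h (n + 1)) atTop (nhds 0) := fun z =>
    (hc z).comp (tendsto_add_atTop_nat 1)
  have hcd : Tendsto (fun n => (h (n + 1) - h n) * y - y * (h (n + 1) - h n))
      atTop (nhds 0) := by
    have := (hc' y).sub (hc y)
    rw [sub_zero] at this
    exact this.congr fun n => by noncomm_ring
  have hce : Tendsto (fun n => (1 - h (n + 1)) * y - y * (1 - h (n + 1))) atTop (nhds 0) := by
    have := (hc' y).neg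
    rw [neg_zero] at this
    exact this.congr fun n => by noncomm_ring
  have hxy : x - y ∈ J := by
    rw [← hπ_ker, map_sub, hy, hμ_lift, sub_self]
  have hj : Tendsto (fun n => h n * (x - y) - (x - y)) atTop (nhds 0) :=
    tendsto_zero_iff_norm_tendsto_zero.2 (h_approx _ hxy)
  rw [← tendsto_zero_iff_norm_tendsto_zero]
  have key := (((tendsto_sqrt_compression h x h_pos h_contr (hc x)).add
    (tendsto_sqrt_compression _ y hd0 hd1 hcd)).add
    (tendsto_sqrt_compression _ y he0 he1 hce)).sub hj
  simp only [add_zero, sub_zero] at key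
  refine key.congr fun n => ?_
  noncomm_ring

end
end
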